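/- For every integer k ≥ 3 and every δ ∈ (0,1), there exists a constant C such that for all sufficiently large n the following holds: if p ∈ [0,1] satisfies p ≥ C·n^{−1/(k−1)}, then the probability that the p-random subset [n]_p of {1,…,n} is (δ,k)-Szemerédi is at least 1 − 2·exp(−pn/8). -/

import Mathlib

attribute [local instance] Classical.propDecidable

/-- `A` is `(δ,k)`-Szemerédi: every subset `B ⊆ A` with `|B| ≥ δ|A|` contains a
`k`-term arithmetic progression. -/
def IsSzemeredi (δ : ℝ) (k : ℕ) (A : Finset ℕ) : Prop :=
  ∀ B ⊆ A, δ * (A.card : ℝ) ≤ (B.card : ℝ) →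
    ∃ a d : ℕ, 0 < a ∧ 0 < d ∧ ∀ i < k, a + i * d ∈ B

/-- The probability that the `p`-random subset of `{1, …, n}` satisfies `P`. -/
noncomputable def randomSubsetProb (n : ℕ) (p : ℝ) (P : Finset ℕ → Prop) : ℝ :=
  ∑ S ∈ (Finset.Icc 1 n).powerset,
    if P S then p ^ S.card * (1 - p) ^ (n - S.card) else 0

/-!
A subset of `{1, …, n}` of density `ε` contains a positive proportion of all progressions of
length `k`, so the hypergraph of progressions in `{1, …, n}` satisfies the hypothesis of the
container theorem at the scale `τ = n ^ (-1 / (k - 1))`: every progression-free set `B` contains a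
fingerprint `F` of size `O(n τ)` which determines a container of `B` of size at most `ε n`. If the
random set is not `(δ, k)`-Szemerédi, then either it has fewer than `p n / 2` elements, or it
contains a fingerprint `F` and unusually many elements of the container of `F`. Chernoff's bound
applies to both events. In the union bound over `F`, the factor `p ^ #F` for the event `F ⊆ S`
outweighs the number of choices of `F`, as `#F` is at most a small multiple of `p n`.

Supersaturation comes from the density Hales-Jewett theorem, proved by induction on the alphabet.
Let `A` be a dense line-free set of words over `Option α`. By the induction hypothesis on `α`, a
random subspace contains many words over `Option α` that stand for lines over `α` inside `A`.
These words form an intersection of `a`-insensitive sets, one for each letter `a`. As `A` has no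
line, it misses these words, up to the few in which `none` does not occur, and is therefore denser
on their complement, which is a disjoint union of intersections of insensitive sets. An insensitive
set is almost partitioned into subspaces, on one of which the density of `A` has increased.
-/

namespace SparseSzemeredi

open Finset Function Combinatorics
open scoped BigOperators

/-! ### Averages and densities -/

section Extend

variable {ι κ α : Type*} {e : κ → ι}

lemma extend_comp_extend (he : Injective e) (v : κ → α) (z : ι → α) :
    extend e (z ∘ e) (extend e v z) = z := by
  funext i
  by_cases hi : ∃ j, e j = i
  · obtain ⟨j, rfl⟩ := hi
    rw [he.extend_apply, comp_apply]
  · rw [extend_apply' _ _ _ hi, extend_apply' _ _ _ hi]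

lemma extend_extend (he : Injective e) (v w : κ → α) (z : ι → α) :
    extend e v (extend e w z) = extend e v z := by
  funext i
  by_cases hi : ∃ j, e j = i
  · obtain ⟨j, rfl⟩ := hi
    rw [he.extend_apply, he.extend_apply]
  · simp only [extend_apply' _ _ _ hi]

/-- Exchanging a word on `κ` with the restriction along `e` of a word on `ι`, an involution. It
shows that overwriting part of a uniformly random word by fresh letters preserves uniformity. -/
noncomputable def exchangeEquiv (α : Type*) (he : Injective e) :
    ((ι → α) × (κ → α)) ≃ ((ι → α) × (κ → α)) :=
  Involutive.toPerm (fun p ↦ (extend e p.2 p.1, p.1 ∘ e)) fun p ↦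
    Prod.ext (extend_comp_extend he p.2 p.1) (extend_comp he p.2 p.1)

end Extend

section Average

variable {X Y ι κ α : Type*} [Fintype X] [Fintype Y]

lemma expect_prod (f : X × Y → ℝ) : 𝔼 p, f p = 𝔼 x, 𝔼 y, f (x, y) := by
  rw [← univ_product_univ, expect_product]

lemma expect_prod_snd [Nonempty X] (f : Y → ℝ) : 𝔼 p : X × Y, f p.2 = 𝔼 y, f y := by
  rw [expect_prod]
  exact Fintype.expect_const (ι := X) (𝔼 y, f y)

lemma expect_comp_equiv (e : X ≃ Y) (f : Y → ℝ) : 𝔼 x, f (e x) = 𝔼 y, f y :=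
  Fintype.expect_equiv e _ _ fun _ ↦ rfl

lemma expect_curry [Fintype ι] [DecidableEq ι] [Fintype κ] [DecidableEq κ] [Fintype α]
    (f : (ι × κ → α) → ℝ) : 𝔼 x : ι → κ → α, f (uncurry x) = 𝔼 x, f x :=
  expect_comp_equiv (Equiv.curry ι κ α).symm f

lemma expect_sum_arrow [Fintype ι] [DecidableEq ι] [Fintype κ] [DecidableEq κ] [Fintype α]
    (f : (ι ⊕ κ → α) → ℝ) : 𝔼 x, f x = 𝔼 z : κ → α, 𝔼 v : ι → α, f (Sum.elim v z) := by
  rw [← expect_comp_equiv (Equiv.sumArrowEquivProdArrow ι κ α).symm, expect_prod, expect_comm]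
  rfl

lemma expect_resample [Fintype ι] [DecidableEq ι] [Fintype κ] [DecidableEq κ] [Fintype α]
    [Nonempty α] {e : κ → ι} (he : Injective e) (f : (ι → α) → ℝ) :
    𝔼 z, f z = 𝔼 z, 𝔼 v : κ → α, f (extend e v z) := by
  have exchange := expect_comp_equiv (exchangeEquiv α he) fun p ↦ f p.1
  rw [expect_prod, expect_prod fun p ↦ f p.1] at exchange
  simp only [Fintype.expect_const] at exchange
  exact exchange.symm

lemma expect_update [Fintype ι] [DecidableEq ι] [Fintype α] [Nonempty α] (i : ι)
    (f : (ι → α) → ℝ) : 𝔼 z, f z = 𝔼 z, 𝔼 c, f (update z i c) := by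
  have he : Injective fun _ : Unit ↦ i := fun _ _ _ ↦ rfl
  rw [expect_resample he]
  refine expect_congr rfl fun z _ ↦ ?_
  rw [← expect_comp_equiv (Equiv.funUnique Unit α).symm]
  refine expect_congr rfl fun c _ ↦ congrArg f (funext fun j ↦ ?_)
  by_cases hj : j = i
  · subst hj
    rw [update_self]
    exact he.extend_apply _ z ()
  · rw [update_of_ne hj, extend_apply' _ _ _ fun ⟨_, h⟩ ↦ hj h.symm]

lemma expect_abs_le_sqrt_expect_sq (f : X → ℝ) : 𝔼 x, |f x| ≤ √(𝔼 x, f x ^ 2) := by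
  refine Real.le_sqrt_of_sq_le ?_
  have cauchy_schwarz := expect_mul_sq_le_sq_mul_sq univ (fun x ↦ |f x|) 1
  simp only [Pi.one_apply, mul_one, one_pow, sq_abs] at cauchy_schwarz
  refine cauchy_schwarz.trans (mul_le_of_le_one_right (expect_nonneg fun _ _ ↦ sq_nonneg _) ?_)
  cases isEmpty_or_nonempty X
  · simp
  · exact (Fintype.expect_const _).le

lemma abs_indicator_one_le_one {X : Type*} (A : Set X) (x : X) :
    |A.indicator (1 : X → ℝ) x| ≤ 1 := by
  by_cases hx : x ∈ A <;> simp [hx]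

/-- The proportion of a finite type that lies in `A`, as a real number. -/
noncomputable def density (A : Set X) : ℝ := 𝔼 x, A.indicator 1 x

lemma density_nonneg (A : Set X) : 0 ≤ density A :=
  expect_nonneg fun _ _ ↦ Set.indicator_nonneg (fun _ _ ↦ zero_le_one) _

lemma density_le_one [Nonempty X] (A : Set X) : density A ≤ 1 :=
  expect_le univ_nonempty fun _ _ ↦
    Set.indicator_apply_le' (fun _ ↦ le_rfl) fun _ ↦ zero_le_one

lemma nonempty_of_density_pos {A : Set X} (h : 0 < density A) : A.Nonempty := by
  rw [Set.nonempty_iff_ne_empty]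
  rintro rfl
  simp [density] at h

lemma expect_indicator_le_density {f : X → ℝ} (hf : ∀ x, f x ≤ 1) (A : Set X) :
    𝔼 x, A.indicator f x ≤ density A :=
  expect_le_expect fun _ _ ↦ Set.indicator_le_indicator (hf _)

lemma expect_indicator_diff {A B : Set X} (h : B ⊆ A) (f : X → ℝ) :
    𝔼 x, (A \ B).indicator f x = 𝔼 x, A.indicator f x - 𝔼 x, B.indicator f x := by
  rw [Set.indicator_sdiff h, ← expect_sub_distrib]
  rfl

lemma sub_le_density_setOf_le [Nonempty X] {f : X → ℝ} (hf : ∀ x, f x ≤ 1) {t : ℝ} (ht : 0 ≤ t) :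
    𝔼 x, f x - t ≤ density {x | t ≤ f x} := by
  have split : density {x | t ≤ f x} + t = 𝔼 x, ({x | t ≤ f x}.indicator 1 x + t) := by
    rw [expect_add_distrib, Fintype.expect_const, density]
  rw [sub_le_iff_le_add, split]
  refine expect_le_expect fun x _ ↦ ?_
  by_cases hx : t ≤ f x
  · rw [Set.indicator_of_mem (show x ∈ {x | t ≤ f x} from hx), Pi.one_apply]
    linarith [hf x]
  · rw [Set.indicator_of_notMem (show x ∉ {x | t ≤ f x} from hx)]
    linarith

lemma exists_density_div_card_le [Finite κ] {A : Set X} {B : κ → Set X}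
    (hA : 0 < density A) (hAB : A ⊆ ⋃ j, B j) :
    ∃ j, density A / Nat.card κ ≤ density (B j) := by
  have := Fintype.ofFinite κ
  have : Nonempty κ := (Set.mem_iUnion.1 (hAB (nonempty_of_density_pos hA).some_mem)).nonempty
  have union_bound : density A ≤ ∑ j, density (B j) := by
    simp only [density, ← expect_sum_comm]
    refine expect_le_expect fun x _ ↦ ?_
    refine Set.indicator_apply_le' (fun hx ↦ ?_) fun _ ↦ ?_
    · obtain ⟨j, hj⟩ := Set.mem_iUnion.1 (hAB hx)
      rw [← Set.indicator_of_mem hj (1 : X → ℝ)]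
      exact single_le_sum (f := fun j ↦ (B j).indicator (1 : X → ℝ) x)
        (fun _ _ ↦ Set.indicator_nonneg (fun _ _ ↦ zero_le_one) _) (mem_univ j)
    · exact sum_nonneg fun _ _ ↦ Set.indicator_nonneg (fun _ _ ↦ zero_le_one) _
  obtain ⟨j, -, hj⟩ := exists_le_of_le_expect univ_nonempty
    (Fintype.expect_eq_sum_div_card fun j ↦ density (B j)).ge
  refine ⟨j, le_trans ?_ hj⟩
  rw [Nat.card_eq_fintype_card]
  gcongr

end Average

/-! ### Combinatorial subspaces and the density Hales-Jewett property -/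

section Subspace

variable {ι κ α η ζ : Type*}

lemma subspace_injective (V : Combinatorics.Subspace η α ι) : Injective V := by
  intro x y hxy
  funext e
  obtain ⟨i, hi⟩ := V.proper e
  simpa only [V.apply_inr hi] using congrFun hxy i

instance finite_subspace [Finite ι] [Finite α] [Finite η] :
    Finite (Combinatorics.Subspace η α ι) :=
  Finite.of_injective Combinatorics.Subspace.idxFun fun _ _ ↦ Combinatorics.Subspace.ext

instance finite_line [Finite ι] [Finite α] : Finite (Line α ι) :=
  Finite.of_injective Line.idxFun fun _ _ ↦ Line.ext

/-- The composition of two combinatorial subspaces: a subspace of a subspace. -/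
def compSubspace (V : Combinatorics.Subspace η α ι) (W : Combinatorics.Subspace ζ α η) :
    Combinatorics.Subspace ζ α ι where
  idxFun i := (V.idxFun i).elim Sum.inl W.idxFun
  proper z := by
    obtain ⟨e, he⟩ := W.proper z
    obtain ⟨i, hi⟩ := V.proper e
    exact ⟨i, by simp [hi, he]⟩

lemma compSubspace_apply (V : Combinatorics.Subspace η α ι) (W : Combinatorics.Subspace ζ α η)
    (x : ζ → α) : compSubspace V W x = V (W x) := by
  funext i
  rcases hi : V.idxFun i with a | e <;> simp [compSubspace, Combinatorics.Subspace.apply_def, hi]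

/-- The image of the line `L` under the subspace `V`. -/
def lineInSubspace (V : Combinatorics.Subspace η α ι) (L : Line α η) : Line α ι where
  idxFun i := (V.idxFun i).elim some L.idxFun
  proper := by
    obtain ⟨e, he⟩ := L.proper
    obtain ⟨i, hi⟩ := V.proper e
    exact ⟨i, by simp [hi, he]⟩

lemma lineInSubspace_apply (V : Combinatorics.Subspace η α ι) (L : Line α η) (a : α) :
    lineInSubspace V L a = V (L a) := by
  funext i
  rcases hi : V.idxFun i with b | e <;>
    simp [lineInSubspace, Combinatorics.Subspace.apply_def, hi]

/-- The subspace of `ι → α` that is `V` on the coordinates in the range of `e`, and is constantly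
equal to `z` elsewhere. -/
noncomputable def extendSubspace {e : κ → ι} (he : Injective e) (V : Combinatorics.Subspace η α κ)
    (z : ι → α) : Combinatorics.Subspace η α ι where
  idxFun := extend e V.idxFun fun i ↦ Sum.inl (z i)
  proper j := by
    obtain ⟨i, hi⟩ := V.proper j
    exact ⟨e i, by rw [he.extend_apply, hi]⟩

lemma extendSubspace_apply {e : κ → ι} (he : Injective e) (V : Combinatorics.Subspace η α κ)
    (z : ι → α) (x : η → α) : extendSubspace he V z x = extend e (V x) z := by
  funext i
  by_cases hi : ∃ j, e j = i
  · obtain ⟨j, rfl⟩ := hi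
    simp only [extendSubspace, Combinatorics.Subspace.apply_def, he.extend_apply]
  · simp only [extendSubspace, Combinatorics.Subspace.apply_def, extend_apply' _ _ _ hi,
      Sum.elim_inl, id_eq]

/-- The product of a line, whose wildcard becomes the wildcard `0`, and an `m`-dimensional
subspace. -/
def lineProdSubspace {m : ℕ} (L : Line α ι) (V : Combinatorics.Subspace (Fin m) α κ) :
    Combinatorics.Subspace (Fin (m + 1)) α (ι ⊕ κ) where
  idxFun := Sum.elim (fun i ↦ (L.idxFun i).elim (Sum.inr 0) Sum.inl)
    fun i ↦ (V.idxFun i).map id Fin.succ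
  proper := by
    refine Fin.cases ?_ fun j ↦ ?_
    · obtain ⟨i, hi⟩ := L.proper
      exact ⟨Sum.inl i, by simp [hi]⟩
    · obtain ⟨i, hi⟩ := V.proper j
      exact ⟨Sum.inr i, by simp [hi]⟩

lemma lineProdSubspace_apply {m : ℕ} (L : Line α ι) (V : Combinatorics.Subspace (Fin m) α κ)
    (x : Fin (m + 1) → α) :
    lineProdSubspace L V x = Sum.elim (L (x 0)) (V fun j ↦ x j.succ) := by
  funext i
  rcases i with i | i
  · rcases hi : L.idxFun i with _ | a <;>
      simp [lineProdSubspace, Combinatorics.Subspace.apply_def, hi]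
  · rcases hi : V.idxFun i with a | e <;>
      simp [lineProdSubspace, Combinatorics.Subspace.apply_def, hi]

lemma exists_subspace_expect_le [Fintype ι] [DecidableEq ι] [Fintype η] [DecidableEq η]
    [Fintype α] [Nonempty α] (h : Fintype.card η ≤ Fintype.card ι) (f : (ι → α) → ℝ) :
    ∃ V : Combinatorics.Subspace η α ι, 𝔼 x, f x ≤ 𝔼 x, f (V x) := by
  obtain ⟨e⟩ := Embedding.nonempty_of_card_le h
  obtain ⟨z, -, hz⟩ := exists_le_of_le_expect univ_nonempty (expect_resample e.injective f).le
  refine ⟨extendSubspace e.injective ⟨Sum.inr, fun j ↦ ⟨j, rfl⟩⟩ z, hz.trans_eq ?_⟩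
  simp only [extendSubspace_apply]
  rfl

end Subspace

section DensityHalesJewett

/-- The density Hales-Jewett property of the alphabet `α`: in high dimension, every set of words of
density at least `δ` contains a combinatorial line. -/
def DensityHalesJewett (α : Type*) [Fintype α] : Prop :=
  ∀ δ : ℝ, 0 < δ → ∃ N : ℕ, ∀ (ι : Type) [Fintype ι] [DecidableEq ι], N ≤ Fintype.card ι →
    ∀ A : Set (ι → α), δ ≤ density A → ∃ L : Line α ι, ∀ a, L a ∈ A

/-- The density Hales-Jewett property of the alphabet `α` for subspaces of arbitrary dimension. -/
def MultidimDensityHalesJewett (α : Type*) [Fintype α] : Prop :=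
  ∀ (m : ℕ) (δ : ℝ), 0 < δ → ∃ N : ℕ, ∀ (ι : Type) [Fintype ι] [DecidableEq ι],
    N ≤ Fintype.card ι → ∀ A : Set (ι → α), δ ≤ density A →
      ∃ V : Combinatorics.Subspace (Fin m) α ι, ∀ x, V x ∈ A

variable {α : Type*} [Fintype α]

lemma density_sum_arrow {ι κ : Type*} [Fintype ι] [DecidableEq ι] [Fintype κ] [DecidableEq κ]
    (A : Set (ι ⊕ κ → α)) :
    density A = 𝔼 z : κ → α, density {v : ι → α | Sum.elim v z ∈ A} :=
  expect_sum_arrow _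

lemma exists_line_density_le [Nonempty α] {ι κ : Type*} [Fintype ι] [DecidableEq ι] [Fintype κ]
    [DecidableEq κ] {δ : ℝ} (hδ : 0 < δ)
    (hline : ∀ B : Set (ι → α), δ / 2 ≤ density B → ∃ L : Line α ι, ∀ a, L a ∈ B)
    {A : Set (ι ⊕ κ → α)} (hA : δ ≤ density A) :
    ∃ L : Line α ι, δ / 2 / Nat.card (Line α ι) ≤
      density {z : κ → α | ∀ a, Sum.elim (L a) z ∈ A} := by
  have dense_fibres :
      δ / 2 ≤ density {z : κ → α | δ / 2 ≤ density {v : ι → α | Sum.elim v z ∈ A}} := by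
    refine le_trans ?_ (sub_le_density_setOf_le (fun _ ↦ density_le_one _) (half_pos hδ).le)
    rw [← density_sum_arrow]
    linarith
  obtain ⟨L, hL⟩ := exists_density_div_card_le (B := fun L : Line α ι ↦
      {z : κ → α | ∀ a, Sum.elim (L a) z ∈ A}) ((half_pos hδ).trans_le dense_fibres)
    fun z hz ↦ Set.mem_iUnion.2 (hline _ hz)
  exact ⟨L, le_trans (by gcongr) hL⟩

theorem DensityHalesJewett.multidim [Nonempty α] (hα : DensityHalesJewett α) :
    MultidimDensityHalesJewett α := by
  intro m
  induction m with
  | zero =>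
    refine fun δ hδ ↦ ⟨0, fun ι _ _ _ A hA ↦ ?_⟩
    obtain ⟨x, hx⟩ := nonempty_of_density_pos (hδ.trans_le hA)
    exact ⟨⟨fun i ↦ Sum.inl (x i), fun e ↦ e.elim0⟩, fun _ ↦ hx⟩
  | succ m ih =>
    intro δ hδ
    obtain ⟨N₁, hN₁⟩ := hα (δ / 2) (by positivity)
    obtain ⟨N₂, hN₂⟩ := ih (δ / 2 / (Nat.card (Line α (Fin (N₁ + 1))))) <| by
      have : (0 : ℝ) < Nat.card (Line α (Fin (N₁ + 1))) := mod_cast Nat.card_pos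
      positivity
    refine ⟨N₁ + 1 + N₂, fun ι _ _ hι A hA ↦ ?_⟩
    obtain ⟨V, hV⟩ := exists_subspace_expect_le (η := Fin (N₁ + 1) ⊕ Fin N₂) (by simpa using hι)
      (A.indicator (1 : (ι → α) → ℝ))
    obtain ⟨L, hL⟩ := exists_line_density_le (A := V ⁻¹' A) hδ
      (fun B hB ↦ hN₁ _ (by simp) B hB) (hA.trans hV)
    obtain ⟨W, hW⟩ := hN₂ _ (by simp) _ hL
    refine ⟨compSubspace V (lineProdSubspace L W), fun x ↦ ?_⟩
    rw [compSubspace_apply, lineProdSubspace_apply]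
    exact hW _ _

end DensityHalesJewett

/-! ### Overwriting a random position -/

section LetterBias

variable {Λ β : Type*} [Fintype Λ] [DecidableEq Λ] [Fintype β]

/-- The relative density, minus one, of the point mass at `b` with respect to the uniform measure
on the alphabet `β`. -/
noncomputable def letterBias (b c : β) : ℝ := (if c = b then (Fintype.card β : ℝ) else 0) - 1

variable [Nonempty β]

lemma expect_letterBias_mul (b : β) (f : β → ℝ) :
    𝔼 c, letterBias b c * f c = f b - 𝔼 c, f c := by
  simp only [letterBias, sub_mul, one_mul]
  rw [expect_sub_distrib, expect_boole_mul']

lemma expect_letterBias (b : β) : 𝔼 c, letterBias b c = 0 := by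
  simpa using expect_letterBias_mul b 1

lemma expect_letterBias_mul_letterBias (b : β) (i j : Λ) :
    𝔼 z : Λ → β, letterBias b (z i) * letterBias b (z j) =
      if i = j then (Fintype.card β : ℝ) - 1 else 0 := by
  rw [expect_update i]
  split_ifs with hij
  · subst hij
    simp only [update_self]
    rw [Fintype.expect_const, expect_letterBias_mul, expect_letterBias, letterBias, if_pos rfl,
      sub_zero]
  · simp only [update_self, update_of_ne (Ne.symm hij), ← expect_mul, expect_letterBias, zero_mul,
      expect_const_zero]

variable [Nonempty Λ]

lemma expect_sq_expect_letterBias_le (b : β) :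
    𝔼 z : Λ → β, (𝔼 i, letterBias b (z i)) ^ 2 ≤ (Fintype.card β : ℝ) / Fintype.card Λ := by
  have expand (z : Λ → β) : (𝔼 i, letterBias b (z i)) ^ 2 =
      𝔼 i, 𝔼 j, letterBias b (z i) * letterBias b (z j) := by
    rw [sq, expect_mul_expect]
  simp only [expand]
  rw [expect_comm]
  refine expect_le univ_nonempty fun i _ ↦ ?_
  rw [expect_comm]
  simp only [expect_letterBias_mul_letterBias]
  rw [Fintype.expect_eq_sum_div_card, sum_ite_eq, if_pos (mem_univ i)]
  gcongr
  linarith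

lemma abs_expect_update_sub_expect_le (b : β) {f : (Λ → β) → ℝ} (hf : ∀ x, |f x| ≤ 1) :
    |𝔼 y : Λ × (Λ → β), f (update y.2 y.1 b) - 𝔼 x, f x| ≤
      √((Fintype.card β : ℝ) / Fintype.card Λ) := by
  have at_position (i : Λ) : 𝔼 z : Λ → β, letterBias b (z i) * f z =
      𝔼 z, f (update z i b) - 𝔼 z, f z := by
    rw [expect_update i, expect_update i f, ← expect_sub_distrib]
    simp only [update_self, expect_letterBias_mul]
  have bias_form : 𝔼 y : Λ × (Λ → β), f (update y.2 y.1 b) - 𝔼 x, f x =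
      𝔼 z : Λ → β, (𝔼 i, letterBias b (z i)) * f z := by
    simp only [expect_mul]
    rw [expect_comm]
    simp only [at_position]
    rw [expect_sub_distrib, Fintype.expect_const, expect_prod]
  rw [bias_form]
  calc |𝔼 z : Λ → β, (𝔼 i, letterBias b (z i)) * f z|
      ≤ 𝔼 z : Λ → β, |(𝔼 i, letterBias b (z i)) * f z| := abs_expect_le _ _
    _ ≤ 𝔼 z : Λ → β, |𝔼 i, letterBias b (z i)| := expect_le_expect fun z _ ↦ by
        rw [abs_mul]
        exact mul_le_of_le_one_right (abs_nonneg _) (hf z)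
    _ ≤ √(𝔼 z : Λ → β, (𝔼 i, letterBias b (z i)) ^ 2) := expect_abs_le_sqrt_expect_sq _
    _ ≤ √((Fintype.card β : ℝ) / Fintype.card Λ) :=
        Real.sqrt_le_sqrt (expect_sq_expect_letterBias_le b)

end LetterBias

section Hybrid

variable {R Y W : Type*} [Fintype R] [DecidableEq R] [Fintype Y] [Nonempty Y]

lemma abs_expect_sub_expect_le_of_update (r : R) {F G : (R → Y) → ℝ} {ε : ℝ}
    (h : ∀ y, |𝔼 c, F (update y r c) - 𝔼 c, G (update y r c)| ≤ ε) :
    |𝔼 y, F y - 𝔼 y, G y| ≤ ε := by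
  rw [expect_update r F, expect_update r G, ← expect_sub_distrib]
  exact (abs_expect_le _ _).trans (expect_le univ_nonempty fun y _ ↦ h y)

lemma abs_expect_sub_expect_le_card_mul {φ ψ : R → Y → W} {ε : ℝ}
    (h : ∀ r (f : W → ℝ), (∀ w, |f w| ≤ 1) → |𝔼 y, f (φ r y) - 𝔼 y, f (ψ r y)| ≤ ε)
    {F : (R → W) → ℝ} (hF : ∀ w, |F w| ≤ 1) :
    |𝔼 y : R → Y, F (fun r ↦ φ r (y r)) - 𝔼 y : R → Y, F (fun r ↦ ψ r (y r))| ≤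
      Fintype.card R * ε := by
  let hybrid (s : Finset R) (y : R → Y) (r : R) : W := if r ∈ s then φ r (y r) else ψ r (y r)
  have hybrid_insert {r : R} {s : Finset R} (hr : r ∉ s) :
      |𝔼 y, F (hybrid (insert r s) y) - 𝔼 y, F (hybrid s y)| ≤ ε := by
    refine abs_expect_sub_expect_le_of_update r fun y ↦ ?_
    convert h r (fun w ↦ F (update (hybrid s y) r w)) (fun _ ↦ hF _) using 7 with c _ c _
    all_goals
      funext r'
      by_cases hr' : r' = r
      · subst hr'
        simp [hybrid, hr]
      · simp [hybrid, hr']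
  have hybrid_card (s : Finset R) : |𝔼 y, F (hybrid s y) - 𝔼 y, F (hybrid ∅ y)| ≤ #s * ε := by
    induction s using Finset.induction_on with
    | empty => simp
    | insert r s hr ih =>
      rw [card_insert_of_notMem hr]
      push_cast
      linarith [abs_sub_le (𝔼 y, F (hybrid (insert r s) y)) (𝔼 y, F (hybrid s y))
        (𝔼 y, F (hybrid ∅ y)), hybrid_insert hr]
  simpa [hybrid] using hybrid_card univ

end Hybrid

section Overwrite

variable {R Λ β : Type*} [DecidableEq Λ]

/-- The words obtained by overwriting, in each block `r : R` of the word `fun r ↦ (y r).2`, the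
letter at the position `(y r).1`. -/
def overwriteSubspace (y : R → Λ × (Λ → β)) : Combinatorics.Subspace R β (R × Λ) where
  idxFun p := if p.2 = (y p.1).1 then Sum.inr p.1 else Sum.inl ((y p.1).2 p.2)
  proper r := ⟨(r, (y r).1), if_pos rfl⟩

lemma overwriteSubspace_apply (y : R → Λ × (Λ → β)) (w : R → β) :
    overwriteSubspace y w = uncurry fun r ↦ update (y r).2 (y r).1 (w r) := by
  funext p
  by_cases hp : p.2 = (y p.1).1 <;>
    simp [overwriteSubspace, Combinatorics.Subspace.apply_def, hp, uncurry]

variable [Fintype R] [DecidableEq R] [Fintype Λ] [Nonempty Λ] [Fintype β]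

lemma expect_arrow_prod_snd (F : (R → Λ → β) → ℝ) :
    𝔼 y : R → Λ × (Λ → β), F (fun r ↦ (y r).2) = 𝔼 x, F x := by
  rw [← expect_comp_equiv (Equiv.arrowProdEquivProdArrow R (fun _ ↦ Λ) fun _ ↦ Λ → β).symm]
  exact expect_prod_snd F

variable [Nonempty β]

lemma abs_expect_overwrite_sub_expect_le (w : R → β) {F : (R × Λ → β) → ℝ}
    (hF : ∀ x, |F x| ≤ 1) :
    |𝔼 y : R → Λ × (Λ → β), F (overwriteSubspace y w) - 𝔼 x, F x| ≤
      Fintype.card R * √((Fintype.card β : ℝ) / Fintype.card Λ) := by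
  have hybrid := abs_expect_sub_expect_le_card_mul (F := fun x ↦ F (uncurry x))
    (φ := fun r (y : Λ × (Λ → β)) ↦ update y.2 y.1 (w r)) (ψ := fun _ y ↦ y.2)
    (fun r f hf ↦ by
      rw [expect_prod_snd]
      exact abs_expect_update_sub_expect_le (w r) hf) fun _ ↦ hF _
  rw [expect_arrow_prod_snd fun x ↦ F (uncurry x), expect_curry] at hybrid
  simpa only [overwriteSubspace_apply] using hybrid

lemma sub_le_expect_density_overwrite {U : Type*} [Fintype U] [Nonempty U] (w : U → R → β)
    (A : Set (R × Λ → β)) :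
    density A - Fintype.card R * √((Fintype.card β : ℝ) / Fintype.card Λ) ≤
      𝔼 y : R → Λ × (Λ → β), density {u | overwriteSubspace y (w u) ∈ A} := by
  simp only [density]
  rw [expect_comm]
  refine le_expect univ_nonempty fun u _ ↦ ?_
  have close := (abs_le.1 (abs_expect_overwrite_sub_expect_le (Λ := Λ) (w u)
    (abs_indicator_one_le_one A))).1
  rw [neg_le_sub_iff_le_add, ← sub_le_iff_le_add] at close
  exact close

end Overwrite

section LineProbability

variable {R Λ α : Type*} [Fintype R] [DecidableEq R] [Fintype Λ] [DecidableEq Λ] [Fintype α]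

/-- The word over `Option α` in which the letter `some a` is substituted for every `none`. A word
over `Option α` thus stands for a line over `α`, as in `Combinatorics.Line.idxFun`. -/
def fillNone {ι α : Type*} (a : α) (x : ι → Option α) : ι → Option α := fun i ↦ some ((x i).getD a)

/-- The probability that a random line over `Option α`, restricted to the letters `some a`, lies in
`A`. The wildcards of the line are one random position in each of the blocks in `T`, and its other
letters are random too. -/
noncomputable def lineProb (A : Set (R × Λ → Option α)) (T : Set R) : ℝ :=
  density {y : R → Λ × (Λ → Option α) | ∀ a : α,
    (uncurry fun r ↦ if r ∈ T then update (y r).2 (y r).1 (some a) else (y r).2) ∈ A}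

lemma lineProb_nonneg (A : Set (R × Λ → Option α)) (T : Set R) : 0 ≤ lineProb A T :=
  density_nonneg _

variable [Nonempty Λ]

lemma lineProb_le_one (A : Set (R × Λ → Option α)) (T : Set R) : lineProb A T ≤ 1 :=
  density_le_one _

lemma abs_density_overwrite_fillNone_sub_lineProb_le (w : R → Option α)
    (A : Set (R × Λ → Option α)) :
    |density {y : R → Λ × (Λ → Option α) | ∀ a, overwriteSubspace y (fillNone a w) ∈ A} -
        lineProb A {r | w r = none}| ≤
      Fintype.card R * √((Fintype.card (Option α) : ℝ) / Fintype.card Λ) := by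
  obtain ⟨T, hT⟩ : ∃ T : Set R, T = {r | w r = none} := ⟨_, rfl⟩
  have mem_T (r : R) : r ∈ T ↔ w r = none := by rw [hT, Set.mem_ofPred_eq]
  let lineIn : Set (R → α → Λ → Option α) := {v | ∀ a, (uncurry fun r ↦ v r a) ∈ A}
  have hybrid := abs_expect_sub_expect_le_card_mul (F := lineIn.indicator 1)
    (φ := fun r (y : Λ × (Λ → Option α)) a ↦ update y.2 y.1 (fillNone a w r))
    (ψ := fun r y a ↦ if r ∈ T then update y.2 y.1 (some a) else y.2)
    (ε := √((Fintype.card (Option α) : ℝ) / Fintype.card Λ))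
    (fun r f hf ↦ by
      cases hw : w r with
      | none =>
        simp only [mem_T, fillNone, hw, if_true, Option.getD_none, sub_self, abs_zero]
        positivity
      | some c =>
        simp only [mem_T, fillNone, hw, Option.getD_some, reduceCtorEq, if_false]
        rw [expect_prod_snd fun x ↦ f fun _ ↦ x]
        exact abs_expect_update_sub_expect_le (some c) fun x ↦ hf fun _ ↦ x)
    (abs_indicator_one_le_one lineIn)
  simp only [overwriteSubspace_apply, ← hT]
  exact hybrid

end LineProbability

/-! ### Density increments on insensitive sets -/

section Insensitive

variable {ι κ η α : Type*}

/-- Membership in `D` does not change when letters `none` and `some a` are exchanged on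
coordinates in `J`. -/
def InsensitiveOn (a : α) (J : Set ι) (D : Set (ι → Option α)) : Prop :=
  ∀ ⦃x y⦄, (∀ i ∉ J, x i = y i) → (∀ i, (x i).getD a = (y i).getD a) → x ∈ D → y ∈ D

lemma insensitiveOn_univ {a : α} {D : Set (ι → Option α)} :
    InsensitiveOn a Set.univ D ↔
      ∀ ⦃x y⦄, (∀ i, (x i).getD a = (y i).getD a) → x ∈ D → y ∈ D :=
  ⟨fun h _ _ ↦ h fun i hi ↦ absurd (Set.mem_univ i) hi, fun h _ _ _ ↦ @h _ _⟩

lemma InsensitiveOn.preimage_subspace {a : α} {D : Set (ι → Option α)}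
    (h : InsensitiveOn a Set.univ D) (V : Combinatorics.Subspace η (Option α) ι) :
    InsensitiveOn a Set.univ (V ⁻¹' D) := by
  rw [insensitiveOn_univ] at h ⊢
  refine fun x y hxy hx ↦ h (fun i ↦ ?_) hx
  rcases hi : V.idxFun i with b | e <;> simp [Combinatorics.Subspace.apply_def, hi, hxy]

lemma InsensitiveOn.preimage_extend {a : α} {J : Set ι} {D : Set (ι → Option α)}
    (h : InsensitiveOn a J D) {e : κ → ι} (he : Injective e) (heJ : Set.range e ⊆ J)
    (z : ι → Option α) : InsensitiveOn a Set.univ {v | extend e v z ∈ D} := by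
  rw [insensitiveOn_univ]
  refine fun x y hxy hx ↦ h (fun i hi ↦ ?_) (fun i ↦ ?_) hx
  · have hi' : ¬ ∃ j, e j = i := fun hj ↦ hi (heJ hj)
    rw [extend_apply' _ _ _ hi', extend_apply' _ _ _ hi']
  · by_cases hi : ∃ j, e j = i
    · obtain ⟨j, rfl⟩ := hi
      rw [he.extend_apply, he.extend_apply, hxy]
    · rw [extend_apply' _ _ _ hi, extend_apply' _ _ _ hi]

/-- The subspace over the alphabet `Option α` with the same wildcards and letters as `V`. -/
def someSubspace (V : Combinatorics.Subspace η α ι) : Combinatorics.Subspace η (Option α) ι where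
  idxFun i := (V.idxFun i).map some id
  proper e := by
    obtain ⟨i, hi⟩ := V.proper e
    exact ⟨i, by rw [hi]; rfl⟩

lemma getD_someSubspace_apply (V : Combinatorics.Subspace η α ι) (x : η → Option α) (a : α)
    (i : ι) : (someSubspace V x i).getD a = V (fun j ↦ (x j).getD a) i := by
  rcases hi : V.idxFun i with b | e <;> simp [someSubspace, Combinatorics.Subspace.apply_def, hi]

end Insensitive

lemma exists_pos_mul_sqrt_div_le (N q : ℕ) {ε : ℝ} (hε : 0 < ε) :
    ∃ l : ℕ, 0 < l ∧ (N : ℝ) * √(q / l) ≤ ε := by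
  obtain ⟨l, hl⟩ := exists_nat_gt ((N : ℝ) ^ 2 * q / ε ^ 2)
  have hl₀ : (0 : ℝ) < l := lt_of_le_of_lt (by positivity) hl
  refine ⟨l, mod_cast hl₀, abs_le_of_sq_le_sq' ?_ hε.le |>.2⟩
  rw [div_lt_iff₀ (by positivity)] at hl
  rw [mul_pow, Real.sq_sqrt (by positivity), ← mul_div_assoc, div_le_iff₀ hl₀]
  linarith

theorem MultidimDensityHalesJewett.exists_subspace_of_insensitiveOn {α : Type*} [Fintype α]
    (hα : MultidimDensityHalesJewett α) (a : α) (m : ℕ) {ε : ℝ} (hε : 0 < ε) :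
    ∃ M : ℕ, ∀ (ι : Type) [Fintype ι] [DecidableEq ι], M ≤ Fintype.card ι →
      ∀ D : Set (ι → Option α), InsensitiveOn a Set.univ D → ε ≤ density D →
      ∃ V : Combinatorics.Subspace (Fin m) (Option α) ι, ∀ x, V x ∈ D := by
  have : Nonempty α := ⟨a⟩
  obtain ⟨N, hN⟩ := hα m (ε / 2) (by positivity)
  obtain ⟨l, hl, hle⟩ := exists_pos_mul_sqrt_div_le N (Fintype.card (Option α)) (half_pos hε)
  have : NeZero l := ⟨hl.ne'⟩
  refine ⟨N * l, fun ι _ _ hι D hD hd ↦ ?_⟩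
  obtain ⟨V, hV⟩ := exists_subspace_expect_le (η := Fin N × Fin l) (by simpa using hι)
    (D.indicator (1 : (ι → Option α) → ℝ))
  have avg := sub_le_expect_density_overwrite (Λ := Fin l)
    (fun (u : Fin N → α) r ↦ some (u r)) (V ⁻¹' D)
  obtain ⟨y, -, hy⟩ := exists_le_of_le_expect univ_nonempty avg
  have dense : ε / 2 ≤
      density {u : Fin N → α | overwriteSubspace y (fun r ↦ some (u r)) ∈ V ⁻¹' D} := by
    refine le_trans ?_ hy
    have : ε ≤ density (V ⁻¹' D) := hd.trans hV
    rw [Fintype.card_fin, Fintype.card_fin]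
    linarith
  obtain ⟨W, hW⟩ := hN (Fin N) (by simp) _ dense
  refine ⟨compSubspace (compSubspace V (overwriteSubspace y)) (someSubspace W), fun x ↦ ?_⟩
  have insensitive := (hD.preimage_subspace V).preimage_subspace (overwriteSubspace y)
  simp only [compSubspace_apply]
  refine insensitiveOn_univ.1 insensitive (fun i ↦ ?_) (hW fun j ↦ (x j).getD a)
  rw [getD_someSubspace_apply, Option.getD_some]

section Copies

variable {ι κ η β : Type*}

/-- The words through which the copy of `V` on the coordinates in the range of `e` lies in `D`. -/
def copyBase (e : κ → ι) (V : Combinatorics.Subspace η β κ) (D : Set (ι → β)) : Set (ι → β) :=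
  {z | ∀ u, extend e (V u) z ∈ D}

/-- The union of the copies of `V`, on the coordinates in the range of `e`, that lie in `D`. -/
def copyUnion (e : κ → ι) (V : Combinatorics.Subspace η β κ) (D : Set (ι → β)) : Set (ι → β) :=
  {x ∈ copyBase e V D | x ∘ e ∈ Set.range V}

variable {e : κ → ι} {V : Combinatorics.Subspace η β κ} {D : Set (ι → β)}

lemma extend_mem_copyBase (he : Injective e) {v : κ → β} {z : ι → β} :
    extend e v z ∈ copyBase e V D ↔ z ∈ copyBase e V D := by
  simp only [copyBase, Set.mem_ofPred_eq, extend_extend he]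

lemma extend_mem_copyUnion (he : Injective e) {v : κ → β} {z : ι → β} :
    extend e v z ∈ copyUnion e V D ↔ z ∈ copyBase e V D ∧ v ∈ Set.range V := by
  rw [copyUnion, Set.mem_sep_iff, extend_mem_copyBase he, extend_comp he]

lemma copyUnion_subset (he : Injective e) : copyUnion e V D ⊆ D := by
  rintro x ⟨hx, u, hu⟩
  have := hx u
  rwa [hu, ← extend_extend he _ (x ∘ e), extend_comp_extend he] at this

lemma InsensitiveOn.diff_copyUnion {α : Type*} {V : Combinatorics.Subspace η (Option α) κ}
    {a : α} {J : Set ι} {D : Set (ι → Option α)} (h : InsensitiveOn a J D) (he : Injective e)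
    (heJ : Set.range e ⊆ J) : InsensitiveOn a (J \ Set.range e) (D \ copyUnion e V D) := by
  intro x y hxy hget hx
  have eq_off_J : ∀ i ∉ J, x i = y i := fun i hi ↦ hxy i fun hi' ↦ hi hi'.1
  have eq_on_range : x ∘ e = y ∘ e := funext fun j ↦ hxy (e j) fun hj ↦ hj.2 ⟨j, rfl⟩
  refine ⟨h eq_off_J hget hx.1, fun hy ↦ hx.2 ⟨fun u ↦ ?_, eq_on_range ▸ hy.2⟩⟩
  refine h (fun i hi ↦ ?_) (fun i ↦ ?_) (hy.1 u)
  · have hi' : ¬ ∃ j, e j = i := fun hj ↦ hi (heJ hj)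
    rw [extend_apply' _ _ _ hi', extend_apply' _ _ _ hi', eq_off_J i hi]
  · by_cases hi : ∃ j, e j = i
    · obtain ⟨j, rfl⟩ := hi
      rw [he.extend_apply, he.extend_apply]
    · rw [extend_apply' _ _ _ hi, extend_apply' _ _ _ hi, hget]

end Copies

section CopiesAverage

lemma expect_indicator_range {X Y : Type*} [Fintype X] [Nonempty X] [Fintype Y] {g : X → Y}
    (hg : Injective g) (f : Y → ℝ) : 𝔼 y, (Set.range g).indicator f y =
      (Fintype.card X : ℝ) / Fintype.card Y * 𝔼 x, f (g x) := by
  have sum_eq : ∑ x, f (g x) = ∑ y, (Set.range g).indicator f y :=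
    Fintype.sum_of_injective g hg _ _ (fun y hy ↦ Set.indicator_of_notMem hy f)
      fun x ↦ (Set.indicator_of_mem (Set.mem_range_self x) f).symm
  rw [Fintype.expect_eq_sum_div_card, Fintype.expect_eq_sum_div_card, sum_eq]
  field_simp

variable {ι κ η β : Type*} [Fintype ι] [DecidableEq ι] [Fintype κ] [DecidableEq κ]
  [Fintype β] [Nonempty β] {e : κ → ι}

lemma exists_density_copyBase_ge [Finite η] (he : Injective e) {D : Set (ι → β)} {ε : ℝ}
    (hε : 0 < ε) (hD : 2 * ε ≤ density D)
    (hslice : ∀ z, ε ≤ density {v : κ → β | extend e v z ∈ D} →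
      ∃ V : Combinatorics.Subspace η β κ, ∀ u, extend e (V u) z ∈ D) :
    ∃ V : Combinatorics.Subspace η β κ,
      ε / Nat.card (Combinatorics.Subspace η β κ) ≤ density (copyBase e V D) := by
  have avg : density D = 𝔼 z, density {v : κ → β | extend e v z ∈ D} := expect_resample he _
  have dense_slices : ε ≤ density {z | ε ≤ density {v : κ → β | extend e v z ∈ D}} := by
    refine le_trans ?_ (sub_le_density_setOf_le (fun _ ↦ density_le_one _) hε.le)
    linarith
  obtain ⟨V, hV⟩ := exists_density_div_card_le (B := fun V ↦ copyBase e V D)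
    (hε.trans_le dense_slices) fun z hz ↦ Set.mem_iUnion.2 (hslice z hz)
  exact ⟨V, le_trans (by gcongr) hV⟩

variable [Fintype η] [DecidableEq η]

lemma expect_indicator_copyUnion (he : Injective e) (V : Combinatorics.Subspace η β κ)
    (D : Set (ι → β)) (f : (ι → β) → ℝ) :
    𝔼 x, (copyUnion e V D).indicator f x =
      (Fintype.card (η → β) : ℝ) / Fintype.card (κ → β) *
        𝔼 z, (copyBase e V D).indicator (fun z ↦ 𝔼 u, f (extend e (V u) z)) z := by
  rw [expect_resample he, mul_expect]
  refine expect_congr rfl fun z _ ↦ ?_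
  by_cases hz : z ∈ copyBase e V D
  · rw [Set.indicator_of_mem hz, ← expect_indicator_range (subspace_injective V) fun v ↦
      f (extend e v z)]
    refine expect_congr rfl fun v _ ↦ ?_
    simp only [Set.indicator, extend_mem_copyUnion he, hz, true_and]
  · simp [Set.indicator, extend_mem_copyUnion he, hz]

lemma density_copyUnion (he : Injective e) (V : Combinatorics.Subspace η β κ) (D : Set (ι → β)) :
    density (copyUnion e V D) =
      (Fintype.card (η → β) : ℝ) / Fintype.card (κ → β) * density (copyBase e V D) := by
  rw [density, expect_indicator_copyUnion he]
  simp only [Pi.one_apply, Fintype.expect_const]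
  rfl

end CopiesAverage

lemma exists_subspace_or_expect_diff_copyUnion_ge {ι κ η β : Type*} [Fintype ι] [DecidableEq ι]
    [Finite κ] [Fintype η] [DecidableEq η] [Fintype β] [Nonempty β] {e : κ → ι} (he : Injective e)
    (V : Combinatorics.Subspace η β κ) (D : Set (ι → β)) (h : (ι → β) → ℝ) :
    (∃ W : Combinatorics.Subspace η β ι, 0 ≤ 𝔼 x, h (W x)) ∨
      𝔼 x, D.indicator h x ≤ 𝔼 x, (D \ copyUnion e V D).indicator h x := by
  classical
  have := Fintype.ofFinite κ
  by_cases hz : ∃ z, 0 ≤ 𝔼 u, h (extend e (V u) z)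
  · obtain ⟨z, hz⟩ := hz
    exact .inl ⟨extendSubspace he V z, by simpa only [extendSubspace_apply] using hz⟩
  · push Not at hz
    refine .inr ?_
    rw [expect_indicator_diff (copyUnion_subset he), expect_indicator_copyUnion he, le_sub_self_iff]
    refine mul_nonpos_of_nonneg_of_nonpos (by positivity) (expect_le univ_nonempty fun z _ ↦ ?_)
    exact Set.indicator_apply_le' (fun _ ↦ (hz z).le) fun _ ↦ le_rfl

lemma MultidimDensityHalesJewett.exists_subspace_or_insensitiveOn {α : Type*} [Fintype α]
    (hα : MultidimDensityHalesJewett α) (a : α) (d : ℕ) {ε : ℝ} (hε : 0 < ε) :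
    ∃ M : ℕ, ∃ θ : ℝ, 0 < θ ∧ ∀ (ι : Type) [Fintype ι] [DecidableEq ι] (h : (ι → Option α) → ℝ),
      (∀ x, h x ≤ 1) → ∀ (J : Set ι) (D : Set (ι → Option α)), InsensitiveOn a J D →
      2 * ε ≤ 𝔼 x, D.indicator h x → M ≤ J.ncard →
      (∃ V : Combinatorics.Subspace (Fin d) (Option α) ι, 0 ≤ 𝔼 x, h (V x)) ∨
        ∃ (J' : Set ι) (D' : Set (ι → Option α)), InsensitiveOn a J' D' ∧
          2 * ε ≤ 𝔼 x, D'.indicator h x ∧ density D' ≤ density D - θ ∧ J.ncard ≤ J'.ncard + M := by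
  obtain ⟨M, hM⟩ := hα.exists_subspace_of_insensitiveOn a d hε
  let ratio : ℝ := Fintype.card (Fin d → Option α) / Fintype.card (Fin M → Option α)
  let count : ℝ := Nat.card (Combinatorics.Subspace (Fin d) (Option α) (Fin M))
  refine ⟨M, ratio * (ε / (count + 1)), by positivity, fun ι _ _ h hh J D hD hhD hMJ ↦ ?_⟩
  have hcard : Fintype.card (Fin M) ≤ Fintype.card J := by
    rwa [Fintype.card_fin, ← Nat.card_eq_fintype_card, Nat.card_coe_set_eq]
  obtain ⟨e₀⟩ := Embedding.nonempty_of_card_le hcard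
  let e : Fin M ↪ ι := e₀.trans (Embedding.subtype _)
  have heJ : Set.range e ⊆ J := Set.range_subset_iff.2 fun j ↦ (e₀ j).2
  obtain ⟨V, hV⟩ := exists_density_copyBase_ge (η := Fin d) e.injective hε
    (hhD.trans (expect_indicator_le_density hh D))
    fun z hz ↦ hM _ (by simp) _ (hD.preimage_extend e.injective heJ z) hz
  refine (exists_subspace_or_expect_diff_copyUnion_ge e.injective V D h).imp_right fun hdiff ↦
    ⟨_, _, hD.diff_copyUnion (V := V) e.injective heJ, hhD.trans hdiff, ?_, ?_⟩
  · have density_diff : density (D \ copyUnion e V D) = density D - density (copyUnion e V D) :=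
      expect_indicator_diff (copyUnion_subset e.injective) 1
    have count_pos : 0 < count := Nat.cast_pos.2 (have : Nonempty _ := ⟨V⟩; Nat.card_pos)
    rw [density_diff, density_copyUnion e.injective]
    refine sub_le_sub_left (mul_le_mul_of_nonneg_left (le_trans ?_ hV) (by positivity)) _
    exact div_le_div_of_nonneg_left hε.le count_pos (le_add_of_nonneg_right zero_le_one)
  · have := Set.ncard_sdiff_add_ncard_of_subset heJ
    rw [Set.ncard_range_of_injective e.injective, Nat.card_fin] at this
    exact this.ge

theorem MultidimDensityHalesJewett.exists_subspace_expect_nonneg {α : Type*} [Fintype α]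
    (hα : MultidimDensityHalesJewett α) (a : α) (d : ℕ) {ε : ℝ} (hε : 0 < ε) :
    ∃ N : ℕ, ∀ (ι : Type) [Fintype ι] [DecidableEq ι], N ≤ Fintype.card ι →
      ∀ h : (ι → Option α) → ℝ, (∀ x, h x ≤ 1) → ∀ D : Set (ι → Option α),
      InsensitiveOn a Set.univ D → 2 * ε ≤ 𝔼 x, D.indicator h x →
      ∃ V : Combinatorics.Subspace (Fin d) (Option α) ι, 0 ≤ 𝔼 x, h (V x) := by
  obtain ⟨M, θ, hθ, step⟩ := hα.exists_subspace_or_insensitiveOn a d hε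
  obtain ⟨r, hr⟩ := exists_nat_gt (1 / θ)
  rw [div_lt_iff₀ hθ] at hr
  refine ⟨r * M, fun ι _ _ hι h hh D hD hhD ↦ ?_⟩
  suffices greedy : ∀ (r : ℕ) (J : Set ι) (D : Set (ι → Option α)), InsensitiveOn a J D →
      2 * ε ≤ 𝔼 x, D.indicator h x → density D ≤ r * θ → r * M ≤ J.ncard →
      ∃ V : Combinatorics.Subspace (Fin d) (Option α) ι, 0 ≤ 𝔼 x, h (V x) from
    greedy r Set.univ D hD hhD ((density_le_one D).trans hr.le)
      (by rwa [Set.ncard_univ, Nat.card_eq_fintype_card])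
  intro r
  induction r with
  | zero =>
    intro J D _ hhD hDθ _
    have := hhD.trans (expect_indicator_le_density hh D)
    simp only [Nat.cast_zero, zero_mul] at hDθ
    linarith
  | succ r ih =>
    intro J D hD hhD hDθ hJ
    rw [add_mul, one_mul] at hJ
    push_cast at hDθ
    obtain hV | ⟨J', D', hD', hhD', hdensity, hncard⟩ :=
      step ι h hh J D hD hhD (le_of_add_le_right hJ)
    · exact hV
    · exact ih J' D' hD' hhD' (by linarith) (by lia)

theorem MultidimDensityHalesJewett.exists_subspace_expect_ge {α : Type*} [Fintype α]
    (hα : MultidimDensityHalesJewett α) (a : α) (d : ℕ) {κ : ℝ} (hκ : 0 < κ) :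
    ∃ N : ℕ, ∀ (ι : Type) [Fintype ι] [DecidableEq ι], N ≤ Fintype.card ι →
      ∀ f : (ι → Option α) → ℝ, (∀ x, f x ≤ 1) → ∀ D : Set (ι → Option α),
      InsensitiveOn a Set.univ D → κ ≤ 𝔼 x, D.indicator f x →
      ∃ V : Combinatorics.Subspace (Fin d) (Option α) ι, κ / 2 ≤ 𝔼 x, f (V x) := by
  obtain ⟨N, hN⟩ := hα.exists_subspace_expect_nonneg a d (ε := κ / 4) (by positivity)
  refine ⟨N, fun ι _ _ hι f hf D hD hfD ↦ ?_⟩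
  have shifted : 2 * (κ / 4) ≤ 𝔼 x, D.indicator (fun x ↦ f x - κ / 2) x := by
    have split : 𝔼 x, D.indicator (fun x ↦ f x - κ / 2) x =
        𝔼 x, D.indicator f x - κ / 2 * density D := by
      rw [density, mul_expect, ← expect_sub_distrib]
      refine expect_congr rfl fun x _ ↦ ?_
      by_cases hx : x ∈ D <;> simp [hx]
    nlinarith [density_le_one D]
  obtain ⟨V, hV⟩ := hN ι hι (fun x ↦ f x - κ / 2) (fun x ↦ by linarith [hf x]) D hD shifted
  refine ⟨V, ?_⟩
  rwa [expect_sub_distrib, Fintype.expect_const, sub_nonneg] at hV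

theorem MultidimDensityHalesJewett.exists_subspace_expect_ge_of_iInter {α : Type*} [Fintype α]
    (hα : MultidimDensityHalesJewett α) (s : Finset α) (d : ℕ) {κ : ℝ} (hκ : 0 < κ) :
    ∃ N : ℕ, ∀ (ι : Type) [Fintype ι] [DecidableEq ι], N ≤ Fintype.card ι →
      ∀ f : (ι → Option α) → ℝ, (∀ x, f x ≤ 1) → ∀ E : α → Set (ι → Option α),
      (∀ a ∈ s, InsensitiveOn a Set.univ (E a)) → κ ≤ 𝔼 x, (⋂ a ∈ s, E a).indicator f x →
      ∃ V : Combinatorics.Subspace (Fin d) (Option α) ι, κ / 2 ^ #s ≤ 𝔼 x, f (V x) := by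
  induction s using Finset.induction_on generalizing d κ with
  | empty =>
    refine ⟨d, fun ι _ _ hι f _ E _ hfE ↦ ?_⟩
    obtain ⟨V, hV⟩ := exists_subspace_expect_le (η := Fin d) (by simpa using hι) f
    refine ⟨V, le_trans ?_ hV⟩
    simpa using hfE
  | insert a s ha ih =>
    obtain ⟨N', hN'⟩ := ih d (half_pos hκ)
    obtain ⟨N, hN⟩ := hα.exists_subspace_expect_ge a N' hκ
    refine ⟨N, fun ι _ _ hι f hf E hE hfE ↦ ?_⟩
    rw [set_biInter_insert, ← Set.indicator_indicator] at hfE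
    obtain ⟨V, hV⟩ := hN ι hι ((⋂ b ∈ s, E b).indicator f)
      (fun x ↦ Set.indicator_apply_le' (fun _ ↦ hf x) fun _ ↦ zero_le_one)
      (E a) (hE a (mem_insert_self a s)) hfE
    obtain ⟨W, hW⟩ := hN' (Fin N') (by simp) (fun x ↦ f (V x)) (fun x ↦ hf _)
      (fun b ↦ V ⁻¹' E b)
      (fun b hb ↦ (hE b (mem_insert_of_mem hb)).preimage_subspace V) (by
        rw [← Set.preimage_iInter₂]
        exact hV)
    refine ⟨compSubspace V W, ?_⟩
    simp only [compSubspace_apply]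
    rw [card_insert_of_notMem ha, pow_succ', ← div_div]
    exact hW

/-! ### Random lines in a dense set -/

section Blocks

variable {R η κ α β : Type*}

/-- The word that is equal to `x j` on the block `f '' ({j} ×ˢ univ)` of coordinates, and to `b₀`
off the blocks. -/
noncomputable def blockWord (f : η × κ → R) (b₀ : β) (x : η → β) : R → β :=
  extend f (fun q ↦ x q.1) fun _ ↦ b₀

lemma fillNone_blockWord (f : η × κ → R) (a₀ a : α) (x : η → Option α) :
    fillNone a (blockWord f (some a₀) x) = blockWord f (some a₀) (fillNone a x) :=
  funext fun r ↦ apply_extend (fun c : Option α ↦ some (c.getD a)) f _ r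

lemma setOf_blockWord_eq_none {f : η × κ → R} (hf : Injective f) (a₀ : α) (x : η → Option α) :
    {r | blockWord f (some a₀) x r = none} = f '' ({j | x j = none} ×ˢ Set.univ) := by
  ext r
  by_cases hr : ∃ q, f q = r
  · obtain ⟨q, rfl⟩ := hr
    simp only [blockWord, Set.mem_ofPred_eq, hf.extend_apply, hf.mem_set_image, Set.mem_prod,
      Set.mem_univ, and_true]
  · simp only [blockWord, Set.mem_ofPred_eq, extend_apply' _ _ _ hr, reduceCtorEq, false_iff]
    exact fun ⟨q, _, hq⟩ ↦ hr ⟨q, hq⟩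

/-- The block words, as a subspace. -/
noncomputable def blockSubspace [Nonempty κ] {f : η × κ → R} (hf : Injective f) (b₀ : β) :
    Combinatorics.Subspace η β R :=
  extendSubspace hf ⟨fun q ↦ Sum.inr q.1, fun j ↦ ⟨(j, Classical.arbitrary κ), rfl⟩⟩ fun _ ↦ b₀

lemma blockSubspace_apply [Nonempty κ] {f : η × κ → R} (hf : Injective f) (b₀ : β) (x : η → β) :
    blockSubspace hf b₀ x = blockWord f b₀ x :=
  extendSubspace_apply hf _ _ x

end Blocks

theorem DensityHalesJewett.exists_lineProb_ge {α : Type*} [Fintype α] [Nonempty α]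
    (hα : DensityHalesJewett α) {δ : ℝ} (hδ : 0 < δ) :
    ∃ m : ℕ, ∃ c : ℝ, 0 < c ∧ ∀ (R Λ κ : Type) [Fintype R] [DecidableEq R] [Fintype Λ]
      [DecidableEq Λ] [Nonempty Λ] (A : Set (R × Λ → Option α)), δ ≤ density A →
      Fintype.card R * √((Fintype.card (Option α) : ℝ) / Fintype.card Λ) ≤ c →
      ∀ f : Fin m × κ → R, Injective f →
        ∃ T : Set (Fin m), T.Nonempty ∧ c ≤ lineProb A (f '' (T ×ˢ Set.univ)) := by
  obtain ⟨m, hm⟩ := hα (δ / 4) (by positivity)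
  let count : ℝ := Nat.card (Line α (Fin m))
  refine ⟨m, δ / 4 / (count + 1), by positivity, fun R Λ κ _ _ _ _ _ A hA hc f hf ↦ ?_⟩
  let a₀ : α := Classical.arbitrary α
  let word (u : Fin m → α) : R → Option α := blockWord f (some a₀) fun j ↦ some (u j)
  let Y := R → Λ × (Λ → Option α)
  have error_le : δ / 4 / (count + 1) ≤ δ / 4 :=
    div_le_self (by positivity) (le_add_of_nonneg_left (Nat.cast_nonneg _))
  have dense_slices :
      δ / 2 ≤ density {y : Y | δ / 4 ≤ density {u | overwriteSubspace y (word u) ∈ A}} := by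
    refine le_trans ?_ (sub_le_density_setOf_le (fun _ ↦ density_le_one _) (by positivity))
    linarith [sub_le_expect_density_overwrite word A]
  obtain ⟨L, hL⟩ := exists_density_div_card_le
    (B := fun L : Line α (Fin m) ↦ {y : Y | ∀ a, overwriteSubspace y (word (L a)) ∈ A})
    ((half_pos hδ).trans_le dense_slices) fun y hy ↦ Set.mem_iUnion.2 (hm _ (by simp) _ hy)
  have fill_eq (a : α) : fillNone a (blockWord f (some a₀) L.idxFun) = word (L a) := by
    rw [fillNone_blockWord]
    rfl
  have close := (abs_le.1 (abs_density_overwrite_fillNone_sub_lineProb_le (Λ := Λ)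
    (blockWord f (some a₀) L.idxFun) A)).2
  simp only [fill_eq, setOf_blockWord_eq_none hf] at close
  refine ⟨{j | L.idxFun j = none}, L.proper, ?_⟩
  have count_pos : 0 < count := Nat.cast_pos.2 (have : Nonempty _ := ⟨L⟩; Nat.card_pos)
  have : δ / 4 / (count + 1) ≤ δ / 4 / count :=
    div_le_div_of_nonneg_left (by positivity) count_pos (le_add_of_nonneg_right zero_le_one)
  have : 2 * (δ / 4 / count) ≤ density {y : Y | ∀ a, overwriteSubspace y (word (L a)) ∈ A} := by
    refine le_trans ?_ hL
    rw [← mul_div_assoc, show 2 * (δ / 4) = δ / 2 by ring]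
    gcongr
  linarith

section Permutations

variable {R : Type*}

lemma exists_perm_image_eq [Finite R] {S T : Set R} (h : S.ncard = T.ncard) :
    ∃ τ : Equiv.Perm R, τ '' S = T := by
  classical
  have := Fintype.ofFinite R
  rw [← Nat.card_coe_set_eq, ← Nat.card_coe_set_eq] at h
  obtain ⟨e⟩ := Finite.card_eq.1 h
  refine ⟨e.extendSubtype, Set.eq_of_subset_of_ncard_le ?_ ?_⟩
  · exact Set.image_subset_iff.2 fun r hr ↦ e.extendSubtype_mem r hr
  · rw [Set.ncard_image_of_injective _ (Equiv.injective _)]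
    exact h.ge

lemma exists_expect_perm_image_eq [Fintype R] [DecidableEq R] {g : Set R → ℝ}
    (hg : ∀ S, g S ∈ Set.Icc 0 1) :
    ∃ G : ℕ → ℝ, (∀ t, G t ∈ Set.Icc 0 1) ∧
      ∀ S : Set R, 𝔼 σ : Equiv.Perm R, g (σ '' S) = G S.ncard := by
  let avg (S : Set R) : ℝ := 𝔼 σ : Equiv.Perm R, g (σ '' S)
  have avg_mem (S) : avg S ∈ Set.Icc 0 1 :=
    ⟨expect_nonneg fun _ _ ↦ (hg _).1, expect_le univ_nonempty fun _ _ ↦ (hg _).2⟩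
  have avg_factors : avg.FactorsThrough Set.ncard := by
    intro S T hST
    obtain ⟨τ, rfl⟩ := exists_perm_image_eq hST
    simp only [avg]
    rw [← expect_comp_equiv (Equiv.mulRight τ) fun σ : Equiv.Perm R ↦ g (σ '' S)]
    simp only [Set.image_image, Equiv.coe_mulRight, Equiv.Perm.coe_mul, comp_apply]
  refine ⟨extend Set.ncard avg 0, fun t ↦ ?_, fun S ↦ (avg_factors.extend_apply 0 S).symm⟩
  by_cases ht : ∃ S : Set R, S.ncard = t
  · obtain ⟨S, rfl⟩ := ht
    rw [avg_factors.extend_apply]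
    exact avg_mem S
  · rw [extend_apply' _ _ _ ht]
    exact ⟨le_rfl, zero_le_one⟩

end Permutations

section Multiplicative

lemma abs_expect_fin_succ_sub_le {G : ℕ → ℝ} (hG : ∀ t, G t ∈ Set.Icc 0 1) (E : ℕ) :
    |𝔼 j : Fin E, G (j + 1) - 𝔼 j : Fin E, G j| ≤ 1 / E := by
  have telescope : ∑ j : Fin E, (G (j + 1) - G j) = G E - G 0 := by
    rw [Fin.sum_univ_eq_sum_range fun j ↦ G (j + 1) - G j, sum_range_sub]
  rw [← expect_sub_distrib, Fintype.expect_eq_sum_div_card, telescope, abs_div, Fintype.card_fin,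
    Nat.abs_cast]
  gcongr
  rw [abs_le]
  constructor <;> linarith [(hG E).1, (hG E).2, (hG 0).1, (hG 0).2]

variable {M E : ℕ}

/-- A product of powers of `1, …, M`. For random exponents below a large `E` its distribution is
almost invariant under multiplication by a number in `[1, M]`. -/
def powerProd (e : Fin M → Fin E) : ℕ := ∏ t : Fin M, (t + 1 : ℕ) ^ (e t : ℕ)

lemma powerProd_pos (e : Fin M → Fin E) : 0 < powerProd e :=
  prod_pos fun _ _ ↦ by positivity

lemma powerProd_update (e : Fin M → Fin E) (t : Fin M) (j : Fin E) :
    powerProd (update e t j) =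
      (∏ s ∈ univ.erase t, (s + 1 : ℕ) ^ (e s : ℕ)) * (t + 1 : ℕ) ^ (j : ℕ) := by
  rw [powerProd, ← prod_erase_mul _ _ (mem_univ t), update_self]
  congr 1
  exact prod_congr rfl fun s hs ↦ by rw [update_of_ne (ne_of_mem_erase hs)]

lemma abs_expect_mul_powerProd_sub_le [NeZero E] {G : ℕ → ℝ} (hG : ∀ t, G t ∈ Set.Icc 0 1)
    {t : ℕ} (ht : 0 < t) (htM : t ≤ M) :
    |𝔼 e : Fin M → Fin E, G (t * powerProd e) - 𝔼 e : Fin M → Fin E, G (powerProd e)| ≤ 1 / E := by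
  obtain ⟨t, rfl⟩ := Nat.exists_eq_add_one.2 ht
  let i : Fin M := ⟨t, htM⟩
  rw [expect_update i, expect_update i fun e : Fin M → Fin E ↦ G (powerProd e),
    ← expect_sub_distrib]
  refine (abs_expect_le _ _).trans (expect_le univ_nonempty fun e _ ↦ ?_)
  have shift (j : ℕ) : (t + 1) * ((∏ s ∈ univ.erase i, (s + 1 : ℕ) ^ (e s : ℕ)) * (t + 1) ^ j) =
      (∏ s ∈ univ.erase i, (s + 1 : ℕ) ^ (e s : ℕ)) * (t + 1) ^ (j + 1) := by ring
  have telescope := abs_expect_fin_succ_sub_le (E := E)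
    (G := fun j ↦ G ((∏ s ∈ univ.erase i, (s + 1 : ℕ) ^ (e s : ℕ)) * (t + 1) ^ j)) fun _ ↦ hG _
  simpa only [powerProd_update, i, shift] using telescope

lemma le_card_mul_expect_mul_powerProd {κ : Type*} [NeZero E] {G : ℕ → ℝ}
    (hG : ∀ t, G t ∈ Set.Icc 0 1) {s : Finset κ} {τ : κ → ℕ} (hτ : ∀ i ∈ s, 0 < τ i ∧ τ i ≤ M)
    {c : ℝ} (hc : ∀ e : Fin M → Fin E, c ≤ ∑ i ∈ s, G (τ i * powerProd e))
    {t : ℕ} (ht : 0 < t) (htM : t ≤ M) :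
    c ≤ #s * (𝔼 e : Fin M → Fin E, G (t * powerProd e) + 2 / E) := by
  have two_div : (2 : ℝ) / E = 1 / E + 1 / E := by ring
  calc c ≤ 𝔼 e : Fin M → Fin E, ∑ i ∈ s, G (τ i * powerProd e) :=
        le_expect univ_nonempty fun e _ ↦ hc e
    _ = ∑ i ∈ s, 𝔼 e : Fin M → Fin E, G (τ i * powerProd e) := expect_sum_comm ..
    _ ≤ ∑ i ∈ s, (𝔼 e : Fin M → Fin E, G (t * powerProd e) + 2 / E) := by
        refine sum_le_sum fun i hi ↦ ?_
        have hi' := abs_le.1 (abs_expect_mul_powerProd_sub_le (E := E) hG (hτ i hi).1 (hτ i hi).2)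
        have ht' := abs_le.1 (abs_expect_mul_powerProd_sub_le (E := E) hG ht htM)
        linarith
    _ = #s * (𝔼 e : Fin M → Fin E, G (t * powerProd e) + 2 / E) := by
        rw [sum_const, nsmul_eq_mul]

end Multiplicative

lemma ncard_image_prod_univ {R η : Type*} {b : ℕ} {f : η × Fin b → R} (hf : Injective f)
    (T : Set η) : (f '' (T ×ˢ Set.univ)).ncard = T.ncard * b := by
  rw [Set.ncard_image_of_injective _ hf, Set.ncard_prod, Set.ncard_univ, Nat.card_fin]

lemma le_sum_nonempty_of_exists_le {m : ℕ} {F : Set (Fin m) → ℝ} (hF : ∀ T, 0 ≤ F T)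
    {c : ℝ} (h : ∃ T : Set (Fin m), T.Nonempty ∧ c ≤ F T) :
    c ≤ ∑ T : Finset (Fin m) with T.Nonempty, F T := by
  obtain ⟨T, hT, hcT⟩ := h
  have hT' : T.toFinset ∈ ({T | T.Nonempty} : Finset (Finset (Fin m))) := by simpa using hT
  have := single_le_sum (f := fun T : Finset (Fin m) ↦ F T) (fun T _ ↦ hF T) hT'
  rw [Set.coe_toFinset] at this
  exact hcT.trans this

/- Averaged over the permutations, `g` depends only on the size of the set, and the distribution of
the size of the union of `t` blocks hardly depends on `t`. -/
lemma le_two_pow_mul_expect_perm_image {R : Type*} [Fintype R] [DecidableEq R] {M E m₀ m : ℕ}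
    [NeZero E] (hm₀ : m₀ ≤ M) (hm : m ≤ M) {g : Set R → ℝ} (hg : ∀ S, g S ∈ Set.Icc 0 1)
    (f₀ : ∀ e : Fin M → Fin E, Fin m₀ × Fin (powerProd e) ↪ R)
    (f : ∀ e : Fin M → Fin E, Fin m × Fin (powerProd e) ↪ R) {c : ℝ}
    (hc : ∀ e (σ : Equiv.Perm R), ∃ T : Set (Fin m₀), T.Nonempty ∧
      c ≤ g (σ '' (f₀ e '' (T ×ˢ Set.univ)))) {T : Set (Fin m)} (hT : T.Nonempty) :
    c ≤ 2 ^ m₀ * (𝔼 e, 𝔼 σ : Equiv.Perm R, g (σ '' (f e '' (T ×ˢ Set.univ))) + 2 / E) := by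
  obtain ⟨G, hG, hGavg⟩ := exists_expect_perm_image_eq hg
  have c_le_sum (e : Fin M → Fin E) :
      c ≤ ∑ T : Finset (Fin m₀) with T.Nonempty, G (#T * powerProd e) := by
    calc c ≤ 𝔼 σ : Equiv.Perm R, ∑ T : Finset (Fin m₀) with T.Nonempty,
          g (σ '' (f₀ e '' (T ×ˢ Set.univ))) := le_expect univ_nonempty fun σ _ ↦
            le_sum_nonempty_of_exists_le (fun T ↦ (hg _).1) (hc e σ)
      _ = ∑ T : Finset (Fin m₀) with T.Nonempty, G (#T * powerProd e) := by
          rw [expect_sum_comm]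
          simp only [hGavg, ncard_image_prod_univ (f₀ e).injective, Set.ncard_coe_finset]
  have hcard : ∀ T ∈ ({T | T.Nonempty} : Finset (Finset (Fin m₀))), 0 < #T ∧ #T ≤ M :=
    fun T hT ↦ ⟨card_pos.2 (mem_filter.1 hT).2, (card_finset_fin_le T).trans hm₀⟩
  have hTm : T.ncard ≤ m := by simpa using Set.ncard_le_ncard (Set.subset_univ T)
  simp only [hGavg, ncard_image_prod_univ (f _).injective]
  refine (le_card_mul_expect_mul_powerProd hG hcard c_le_sum ((Set.ncard_pos).2 hT)
    (hTm.trans hm)).trans ?_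
  have : 0 ≤ 𝔼 e : Fin M → Fin E, G (T.ncard * powerProd e) := expect_nonneg fun _ _ ↦ (hG _).1
  gcongr
  exact_mod_cast (card_filter_le _ _).trans_eq (by simp)

theorem DensityHalesJewett.exists_random_blocks {α : Type*} [Fintype α] [Nonempty α]
    (hα : DensityHalesJewett α) {δ : ℝ} (hδ : 0 < δ) :
    ∃ c : ℝ, 0 < c ∧ ∀ m : ℕ, ∃ (N : ℕ) (Ω : Type) (_ : Fintype Ω) (_ : Nonempty Ω) (b : Ω → ℕ)
      (f : ∀ ω, Fin m × Fin (b ω) ↪ Fin N), (∀ ω, 0 < b ω) ∧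
      ∀ (Λ : Type) [Fintype Λ] [DecidableEq Λ] [Nonempty Λ] (A : Set (Fin N × Λ → Option α)),
        δ ≤ density A → N * √((Fintype.card (Option α) : ℝ) / Fintype.card Λ) ≤ c →
        ∀ T : Set (Fin m), T.Nonempty → c ≤ 𝔼 ω, lineProb A (f ω '' (T ×ˢ Set.univ)) := by
  obtain ⟨m₀, c, hc, hline⟩ := hα.exists_lineProb_ge hδ
  obtain ⟨E, hE⟩ := exists_nat_gt (4 * 2 ^ m₀ / c)
  have hE₀ : (0 : ℝ) < E := lt_of_le_of_lt (by positivity) hE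
  have : NeZero E := ⟨by rintro rfl; simp at hE₀⟩
  have two_div_le : (2 : ℝ) / E ≤ c / 2 ^ m₀ / 2 := by
    rw [div_lt_iff₀ hc] at hE
    rw [div_div, div_le_div_iff₀ hE₀ (by positivity)]
    linarith
  refine ⟨c / 2 ^ m₀ / 2, by positivity, fun m ↦ ?_⟩
  let M := max m m₀
  let N := M * ∑ e : Fin M → Fin E, powerProd e
  have card_le (e : Fin M → Fin E) {m' : ℕ} (h : m' ≤ M) :
      Fintype.card (Fin m' × Fin (powerProd e)) ≤ Fintype.card (Fin N) := by
    simp only [Fintype.card_prod, Fintype.card_fin]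
    exact Nat.mul_le_mul h (single_le_sum (fun _ _ ↦ Nat.zero_le _) (mem_univ e))
  let f₀ (e) : Fin m₀ × Fin (powerProd e) ↪ Fin N :=
    (Embedding.nonempty_of_card_le (card_le e (le_max_right m m₀))).some
  let f (e) : Fin m × Fin (powerProd e) ↪ Fin N :=
    (Embedding.nonempty_of_card_le (card_le e (le_max_left m m₀))).some
  refine ⟨N, (Fin M → Fin E) × Equiv.Perm (Fin N), inferInstance, inferInstance,
    fun ω ↦ powerProd ω.1, fun ω ↦ (f ω.1).trans ω.2.toEmbedding,
    fun ω ↦ powerProd_pos ω.1, fun Λ _ _ _ A hA herr T hT ↦ ?_⟩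
  have herr' : Fintype.card (Fin N) * √((Fintype.card (Option α) : ℝ) / Fintype.card Λ) ≤ c := by
    rw [Fintype.card_fin]
    exact herr.trans ((half_le_self (by positivity)).trans
      (div_le_self hc.le (one_le_pow₀ one_le_two)))
  have avg := le_two_pow_mul_expect_perm_image (le_max_right m m₀) (le_max_left m m₀)
    (fun S ↦ ⟨lineProb_nonneg A S, lineProb_le_one A S⟩) f₀ f (fun e σ ↦ by
      obtain ⟨T, hT, hcT⟩ := hline _ _ _ A hA herr' (σ ∘ f₀ e) (σ.injective.comp (f₀ e).injective)
      exact ⟨T, hT, by rwa [← Set.image_comp]⟩) hT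
  rw [← div_le_iff₀' (by positivity)] at avg
  simp only [expect_prod, Embedding.coe_trans, Equiv.coe_toEmbedding, Set.image_comp]
  linarith

/-! ### The density Hales-Jewett theorem -/

section FilledIn

variable {ι α : Type*}

/-- The words over `Option α` that stand for lines over `α` contained in `S`. -/
def filledIn (S : Set (ι → Option α)) : Set (ι → Option α) := {x | ∀ a, fillNone a x ∈ S}

lemma insensitiveOn_setOf_fillNone_mem (a : α) (S : Set (ι → Option α)) :
    InsensitiveOn a Set.univ {x | fillNone a x ∈ S} := by
  refine insensitiveOn_univ.2 fun x y hxy hx ↦ ?_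
  have : fillNone a x = fillNone a y := funext fun i ↦ congrArg some (hxy i)
  rwa [Set.mem_ofPred_eq, ← this]

lemma InsensitiveOn.compl {a : α} {S : Set (ι → Option α)} (h : InsensitiveOn a Set.univ S) :
    InsensitiveOn a Set.univ Sᶜ := by
  rw [insensitiveOn_univ] at h ⊢
  exact fun x y hxy hx hy ↦ hx (h (fun i ↦ (hxy i).symm) hy)

lemma exists_line_of_mem_filledIn {S : Set (ι → Option α)} {x : ι → Option α} (hx : x ∈ S)
    (hfill : x ∈ filledIn S) {i : ι} (hi : x i = none) : ∃ L : Line (Option α) ι, ∀ a, L a ∈ S := by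
  let L : Line (Option α) ι := ⟨fun j ↦ (x j).map some, i, by rw [hi, Option.map_none]⟩
  have L_none : L none = x := by
    funext j
    rcases hj : x j with _ | b <;> simp [L, hj]
  have L_some (a : α) : L (some a) = fillNone a x := by
    funext j
    rcases hj : x j with _ | b <;> simp [L, fillNone, hj]
  refine ⟨L, fun a ↦ ?_⟩
  cases a with
  | none => rwa [L_none]
  | some a => exact L_some a ▸ hfill a

variable [Fintype ι] [DecidableEq ι] [Fintype α]

lemma density_setOf_forall_ne_none [Nonempty α] :
    density {x : ι → Option α | ∀ i, x i ≠ none} =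
      ((Fintype.card α : ℝ) / (Fintype.card α + 1)) ^ Fintype.card ι := by
  have range_eq : {x : ι → Option α | ∀ i, x i ≠ none} =
      Set.range fun (u : ι → α) i ↦ some (u i) := by
    ext x
    simp only [Set.mem_ofPred_eq, Option.ne_none_iff_exists, Set.mem_range, funext_iff]
    exact Classical.skolem
  have inj : Injective fun (u : ι → α) i ↦ some (u i) :=
    fun u v h ↦ funext fun i ↦ Option.some_injective _ (congrFun h i)
  rw [density, range_eq, expect_indicator_range inj]
  simp [div_pow]

lemma exists_density_setOf_forall_ne_none_le (α : Type*) [Fintype α] [Nonempty α] {ε : ℝ}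
    (hε : 0 < ε) :
    ∃ m₀ : ℕ, ∀ m ≥ m₀, density {x : Fin m → Option α | ∀ i, x i ≠ none} ≤ ε := by
  have base_lt : (Fintype.card α : ℝ) / (Fintype.card α + 1) < 1 := by
    rw [div_lt_one (by positivity)]
    exact lt_add_one _
  obtain ⟨m₀, hm₀⟩ := exists_pow_lt_of_lt_one hε base_lt
  refine ⟨m₀, fun m hm ↦ ?_⟩
  rw [density_setOf_forall_ne_none, Fintype.card_fin]
  exact (pow_le_pow_of_le_one (by positivity) base_lt.le hm).trans hm₀.le

lemma le_expect_indicator_compl_filledIn [Nonempty α] {S : Set (ι → Option α)}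
    (hS : ¬ ∃ L : Line (Option α) ι, ∀ a, L a ∈ S) (δ : ℝ) :
    density S + δ * density (filledIn S) - density {x : ι → Option α | ∀ i, x i ≠ none} - δ ≤
      𝔼 x, (filledIn S)ᶜ.indicator (fun x ↦ S.indicator 1 x - δ) x := by
  let noNone : Set (ι → Option α) := {x | ∀ i, x i ≠ none}
  have pointwise (x : ι → Option α) : S.indicator 1 x + δ * (filledIn S).indicator 1 x -
      noNone.indicator 1 x - δ ≤ (filledIn S)ᶜ.indicator (fun x ↦ S.indicator 1 x - δ) x := by
    have noNone_nonneg : 0 ≤ noNone.indicator (1 : (ι → Option α) → ℝ) x :=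
      Set.indicator_nonneg (fun _ _ ↦ zero_le_one) x
    by_cases hfill : x ∈ filledIn S
    · by_cases hx : x ∈ S
      · have : x ∈ noNone := fun i hi ↦ hS (exists_line_of_mem_filledIn hx hfill hi)
        simp [hfill, hx, this]
      · simpa [hfill, hx] using noNone_nonneg
    · simpa [hfill] using noNone_nonneg
  calc _ = 𝔼 x, (S.indicator 1 x + δ * (filledIn S).indicator 1 x - noNone.indicator 1 x - δ) := by
        simp only [expect_sub_distrib, expect_add_distrib, ← mul_expect, Fintype.expect_const]
        rfl
    _ ≤ _ := expect_le_expect fun x _ ↦ pointwise x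

end FilledIn

lemma sum_indicator_biInter_or_compl {X α : Type*} [Fintype α] [DecidableEq α] (E : α → Set X)
    (f : X → ℝ) (x : X) :
    ∑ t ∈ univ.erase (univ : Finset α),
        (⋂ a ∈ (univ : Finset α), if a ∈ t then E a else (E a)ᶜ).indicator f x =
      (⋂ a, E a)ᶜ.indicator f x := by
  let pattern : Finset α := {a | x ∈ E a}
  have mem_iff (t : Finset α) :
      (x ∈ ⋂ a ∈ (univ : Finset α), if a ∈ t then E a else (E a)ᶜ) ↔ pattern = t := by
    simp only [Set.mem_iInter, mem_univ, forall_true_left, Finset.ext_iff, pattern, mem_filter,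
      true_and]
    refine forall_congr' fun a ↦ ?_
    split_ifs with ha <;> simp [ha]
  have mem_compl_iff : x ∈ (⋂ a, E a)ᶜ ↔ pattern ∈ univ.erase (univ : Finset α) := by
    simp [pattern, filter_eq_self]
  simp only [Set.indicator, mem_iff, mem_compl_iff, sum_ite_eq]

lemma exists_div_two_pow_le_expect_indicator {X α : Type*} [Fintype X] [Fintype α] [DecidableEq α]
    (E : α → Set X) (f : X → ℝ) {κ : ℝ} (hκ : 0 < κ)
    (h : κ ≤ 𝔼 x, (⋂ a, E a)ᶜ.indicator f x) :
    ∃ t : Finset α, κ / 2 ^ Fintype.card α ≤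
      𝔼 x, (⋂ a ∈ (univ : Finset α), if a ∈ t then E a else (E a)ᶜ).indicator f x := by
  simp only [← sum_indicator_biInter_or_compl, expect_sum_comm] at h
  have hne : (univ.erase (univ : Finset α)).Nonempty := by
    by_contra hempty
    rw [not_nonempty_iff_eq_empty.1 hempty, sum_empty] at h
    exact hκ.not_ge h
  obtain ⟨t, -, ht⟩ := exists_le_of_sum_le (f := fun _ ↦ κ / 2 ^ Fintype.card α) hne <| by
    refine le_trans ?_ h
    rw [sum_const, nsmul_eq_mul, mul_div_left_comm]
    refine mul_le_of_le_one_right hκ.le ((div_le_one₀ (by positivity)).2 ?_)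
    exact_mod_cast (card_le_univ _).trans_eq (Fintype.card_finset)
  exact ⟨t, ht⟩

lemma exists_line_of_one_lt_add_mul {α : Type*} [Fintype α] {δ γ : ℝ}
    (hincr : ∀ d : ℕ, ∃ N : ℕ, ∀ (ι : Type) [Fintype ι] [DecidableEq ι],
      N ≤ Fintype.card ι → ∀ A : Set (ι → Option α), δ ≤ density A →
      (¬ ∃ L : Line (Option α) ι, ∀ a, L a ∈ A) →
      ∃ V : Combinatorics.Subspace (Fin d) (Option α) ι, density A + γ ≤ density (V ⁻¹' A))
    (hγ : 0 < γ) (j : ℕ) :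
    ∃ N : ℕ, ∀ (ι : Type) [Fintype ι] [DecidableEq ι], N ≤ Fintype.card ι →
      ∀ A : Set (ι → Option α), δ ≤ density A → 1 < density A + j * γ →
      ∃ L : Line (Option α) ι, ∀ a, L a ∈ A := by
  induction j with
  | zero =>
    refine ⟨0, fun ι _ _ _ A _ hA ↦ absurd (density_le_one A) (not_le.2 ?_)⟩
    simpa using hA
  | succ j ih =>
    obtain ⟨d, hd⟩ := ih
    obtain ⟨N, hN⟩ := hincr d
    refine ⟨N, fun ι _ _ hι A hA hj ↦ ?_⟩
    by_contra hline
    obtain ⟨V, hV⟩ := hN ι hι A hA hline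
    push_cast at hj
    obtain ⟨L, hL⟩ := hd (Fin d) (by simp) (V ⁻¹' A) (by linarith) (by linarith)
    exact hline ⟨lineInSubspace V L, fun a ↦ by rw [lineInSubspace_apply]; exact hL a⟩

section Increment

variable {α : Type*} [Fintype α] [Nonempty α]

lemma div_four_le_expect_of_forall_exists_eq_none {m : ℕ}
    (hm : density {x : Fin m → Option α | ∀ i, x i ≠ none} ≤ 1 / 2) {c : ℝ} (hc : 0 ≤ c)
    {F : (Fin m → Option α) → ℝ} (hF₀ : ∀ x, 0 ≤ F x) (hF : ∀ x, (∃ i, x i = none) → c / 2 ≤ F x) :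
    c / 4 ≤ 𝔼 x, F x := by
  have pointwise (x : Fin m → Option α) :
      c / 2 * (1 - {x : Fin m → Option α | ∀ i, x i ≠ none}.indicator 1 x) ≤ F x := by
    by_cases hx : ∃ i, x i = none
    · have hx' : x ∉ {x : Fin m → Option α | ∀ i, x i ≠ none} := by simpa using hx
      simpa [hx'] using hF x hx
    · have hx' : x ∈ {x : Fin m → Option α | ∀ i, x i ≠ none} := by simpa using hx
      simpa [hx'] using hF₀ x
  have avg := expect_le_expect (s := univ) fun x _ ↦ pointwise x
  rw [← mul_expect, expect_sub_distrib, Fintype.expect_const] at avg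
  change c / 2 * (1 - density _) ≤ _ at avg
  nlinarith

lemma div_four_le_expect_density_filledIn {Ω R Λ : Type*} [Fintype Ω] [Nonempty Ω] [Fintype R]
    [DecidableEq R] [Fintype Λ] [DecidableEq Λ] [Nonempty Λ] {m : ℕ}
    (hm : density {x : Fin m → Option α | ∀ i, x i ≠ none} ≤ 1 / 2) {A : Set (R × Λ → Option α)}
    {b : Ω → ℕ} (f : ∀ ω, Fin m × Fin (b ω) ↪ R) {c : ℝ} (hc : 0 ≤ c)
    (hprob : ∀ T : Set (Fin m), T.Nonempty → c ≤ 𝔼 ω, lineProb A (f ω '' (T ×ˢ Set.univ)))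
    (herr : Fintype.card R * √((Fintype.card (Option α) : ℝ) / Fintype.card Λ) ≤ c / 2) (a₀ : α) :
    c / 4 ≤ 𝔼 ω, 𝔼 y : R → Λ × (Λ → Option α),
      density (filledIn {x | overwriteSubspace y (blockWord (f ω) (some a₀) x) ∈ A}) := by
  let filled (ω) (x : Fin m → Option α) : Set (R → Λ × (Λ → Option α)) :=
    {y | ∀ a, overwriteSubspace y (fillNone a (blockWord (f ω) (some a₀) x)) ∈ A}
  have swap : 𝔼 ω, 𝔼 y : R → Λ × (Λ → Option α),
      density (filledIn {x | overwriteSubspace y (blockWord (f ω) (some a₀) x) ∈ A}) =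
        𝔼 x, 𝔼 ω, density (filled ω x) := by
    rw [expect_comm univ univ fun x ω ↦ density (filled ω x)]
    refine expect_congr rfl fun ω _ ↦ (expect_comm _ _ _).trans ?_
    refine expect_congr rfl fun x _ ↦ expect_congr rfl fun y _ ↦ ?_
    have : x ∈ filledIn {x | overwriteSubspace y (blockWord (f ω) (some a₀) x) ∈ A} ↔
        y ∈ filled ω x := by
      simp only [filledIn, filled, fillNone_blockWord, Set.mem_ofPred_eq]
    simp only [Set.indicator, this, Pi.one_apply]
  rw [swap]
  refine div_four_le_expect_of_forall_exists_eq_none hm hc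
    (fun x ↦ expect_nonneg fun _ _ ↦ density_nonneg _) fun x hx ↦ ?_
  have close (ω : Ω) :
      lineProb A (f ω '' ({j | x j = none} ×ˢ Set.univ)) - c / 2 ≤ density (filled ω x) := by
    have := (abs_le.1 (abs_density_overwrite_fillNone_sub_lineProb_le (Λ := Λ)
      (blockWord (f ω) (some a₀) x) A)).1
    rw [setOf_blockWord_eq_none (f ω).injective] at this
    linarith
  calc c / 2 = c - c / 2 := by ring
    _ ≤ 𝔼 ω, (lineProb A (f ω '' ({j | x j = none} ×ˢ Set.univ)) - c / 2) := by
        rw [expect_sub_distrib, Fintype.expect_const]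
        exact sub_le_sub_right (hprob _ hx) _
    _ ≤ 𝔼 ω, density (filled ω x) := expect_le_expect fun ω _ ↦ close ω

theorem DensityHalesJewett.exists_subspace_filledIn (hα : DensityHalesJewett α) {δ : ℝ}
    (hδ : 0 < δ) :
    ∃ c : ℝ, 0 < c ∧ ∀ m : ℕ, density {x : Fin m → Option α | ∀ i, x i ≠ none} ≤ 1 / 2 →
      ∃ N : ℕ, ∀ (ι : Type) [Fintype ι] [DecidableEq ι], N ≤ Fintype.card ι →
      ∀ A : Set (ι → Option α), δ ≤ density A →
      ∃ V : Combinatorics.Subspace (Fin m) (Option α) ι,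
        density A + c ≤ density (V ⁻¹' A) + density A * density (filledIn (V ⁻¹' A)) := by
  obtain ⟨c, hc, hblocks⟩ := hα.exists_random_blocks hδ
  refine ⟨δ * c / 8, by positivity, fun m hm ↦ ?_⟩
  obtain ⟨N, Ω, _, _, b, f, hb, hprob⟩ := hblocks m
  obtain ⟨l, hl, herr⟩ := exists_pos_mul_sqrt_div_le N (Fintype.card (Option α))
    (show 0 < min (c / 2) (δ * c / 8) by positivity)
  rw [le_min_iff] at herr
  have : NeZero l := ⟨hl.ne'⟩
  refine ⟨N * l, fun ι _ _ hι A hA ↦ ?_⟩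
  obtain ⟨V, hV⟩ := exists_subspace_expect_le (η := Fin N × Fin l) (by simpa using hι)
    (A.indicator (1 : (ι → Option α) → ℝ))
  let a₀ : α := Classical.arbitrary α
  let slice (ω) (y : Fin N → Fin l × (Fin l → Option α)) : Set (Fin m → Option α) :=
    {x | overwriteSubspace y (blockWord (f ω) (some a₀) x) ∈ V ⁻¹' A}
  have avg_slice (ω : Ω) : density A - δ * c / 8 ≤ 𝔼 y, density (slice ω y) := by
    have := sub_le_expect_density_overwrite (Λ := Fin l) (blockWord (f ω) (some a₀)) (V ⁻¹' A)
    rw [Fintype.card_fin, Fintype.card_fin] at this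
    have : density A ≤ density (V ⁻¹' A) := hV
    linarith
  have avg_filled : c / 4 ≤ 𝔼 ω, 𝔼 y, density (filledIn (slice ω y)) :=
    div_four_le_expect_density_filledIn hm f hc.le
      (hprob _ _ (hA.trans hV) (by simpa using herr.1.trans (half_le_self hc.le)))
      (by simpa using herr.1) a₀
  obtain ⟨ω, -, hω⟩ := exists_le_of_le_expect univ_nonempty (le_refl
    (𝔼 ω, 𝔼 y, (density (slice ω y) + density A * density (filledIn (slice ω y)))))
  obtain ⟨y, -, hy⟩ := exists_le_of_le_expect univ_nonempty hω
  have : NeZero (b ω) := ⟨(hb ω).ne'⟩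
  refine ⟨compSubspace (compSubspace V (overwriteSubspace y))
    (blockSubspace (f ω).injective (some a₀)), ?_⟩
  have preimage_eq : compSubspace (compSubspace V (overwriteSubspace y))
      (blockSubspace (f ω).injective (some a₀)) ⁻¹' A = slice ω y := by
    ext x
    simp only [Set.mem_preimage, compSubspace_apply, blockSubspace_apply, slice, Set.mem_ofPred_eq]
  rw [preimage_eq]
  refine le_trans ?_ hy
  simp only [expect_add_distrib, ← mul_expect]
  have : density A - δ * c / 8 ≤ 𝔼 ω, 𝔼 y, density (slice ω y) :=
    le_expect univ_nonempty fun ω _ ↦ avg_slice ω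
  nlinarith

theorem DensityHalesJewett.exists_density_increment (hα : DensityHalesJewett α) {δ : ℝ}
    (hδ : 0 < δ) :
    ∃ γ : ℝ, 0 < γ ∧ ∀ d : ℕ, ∃ N : ℕ, ∀ (ι : Type) [Fintype ι] [DecidableEq ι],
      N ≤ Fintype.card ι → ∀ A : Set (ι → Option α), δ ≤ density A →
      (¬ ∃ L : Line (Option α) ι, ∀ a, L a ∈ A) →
      ∃ V : Combinatorics.Subspace (Fin d) (Option α) ι, density A + γ ≤ density (V ⁻¹' A) := by
  obtain ⟨c, hc, hfilled⟩ := hα.exists_subspace_filledIn hδ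
  let κ : ℝ := c / 2 / 2 ^ Fintype.card α
  have hκ : 0 < κ := by positivity
  refine ⟨κ / 2 ^ #(univ : Finset α), by positivity, fun d ↦ ?_⟩
  obtain ⟨m₁, hm₁⟩ := hα.multidim.exists_subspace_expect_ge_of_iInter (univ : Finset α) d hκ
  obtain ⟨m₂, hm₂⟩ := exists_density_setOf_forall_ne_none_le α
    (show 0 < min (c / 2) (1 / 2) by positivity)
  have no_none := hm₂ _ (le_max_right m₁ m₂)
  rw [le_min_iff] at no_none
  obtain ⟨N, hN⟩ := hfilled (max m₁ m₂) no_none.2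
  refine ⟨N, fun ι _ _ hι A hA hline ↦ ?_⟩
  obtain ⟨V, hV⟩ := hN ι hι A hA
  have no_line : ¬ ∃ L : Line (Option α) (Fin (max m₁ m₂)), ∀ a, L a ∈ V ⁻¹' A :=
    fun ⟨L, hL⟩ ↦ hline ⟨lineInSubspace V L, fun a ↦ by rw [lineInSubspace_apply]; exact hL a⟩
  have filledIn_eq : filledIn (V ⁻¹' A) = ⋂ a, {x | fillNone a x ∈ V ⁻¹' A} :=
    Set.ofPred_forall _
  have bias := le_expect_indicator_compl_filledIn no_line (density A)
  obtain ⟨t, ht⟩ := exists_div_two_pow_le_expect_indicator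
    (fun a ↦ {x | fillNone a x ∈ V ⁻¹' A}) (fun x ↦ (V ⁻¹' A).indicator 1 x - density A)
    (half_pos hc) (by rw [← filledIn_eq]; linarith)
  obtain ⟨W, hW⟩ := hm₁ (Fin (max m₁ m₂)) (by simp) _
    (fun x ↦ by
      have := Set.indicator_le_self' (s := V ⁻¹' A) (f := (1 : (Fin (max m₁ m₂) → Option α) → ℝ))
        (fun _ _ ↦ zero_le_one) x
      have := density_nonneg A
      simp only [Pi.one_apply] at *
      linarith) _
    (fun a _ ↦ by
      split_ifs
      exacts [insensitiveOn_setOf_fillNone_mem a _, (insensitiveOn_setOf_fillNone_mem a _).compl])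
    ht
  refine ⟨compSubspace V W, ?_⟩
  rw [expect_sub_distrib, Fintype.expect_const, le_sub_iff_add_le'] at hW
  refine hW.trans_eq ?_
  simp only [density, ← compSubspace_apply, Set.indicator, Set.mem_preimage, Pi.one_apply]

theorem DensityHalesJewett.option (hα : DensityHalesJewett α) :
    DensityHalesJewett (Option α) := by
  intro δ hδ
  obtain ⟨γ, hγ, hincr⟩ := hα.exists_density_increment hδ
  obtain ⟨j, hj⟩ := Archimedean.arch (1 : ℝ) hγ
  rw [nsmul_eq_mul] at hj
  obtain ⟨N, hN⟩ := exists_line_of_one_lt_add_mul hincr hγ j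
  exact ⟨N, fun ι _ _ hι A hA ↦ hN ι hι A hA (by linarith)⟩

end Increment

lemma DensityHalesJewett.of_equiv {α β : Type*} [Fintype α] [Fintype β] (e : α ≃ β)
    (hα : DensityHalesJewett α) : DensityHalesJewett β := by
  intro δ hδ
  obtain ⟨N, hN⟩ := hα δ hδ
  refine ⟨N, fun ι _ _ hι A hA ↦ ?_⟩
  obtain ⟨L, hL⟩ := hN ι hι {x | e ∘ x ∈ A} <|
    hA.trans_eq (expect_comp_equiv (Equiv.arrowCongr (Equiv.refl ι) e) _).symm
  refine ⟨L.map e, fun b ↦ ?_⟩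
  rw [← e.apply_symm_apply b, Line.map_apply]
  exact hL _

lemma densityHalesJewett_of_subsingleton (α : Type*) [Fintype α] [Subsingleton α] :
    DensityHalesJewett α := by
  refine fun δ hδ ↦ ⟨1, fun ι _ _ hι A hA ↦ ?_⟩
  have : Nonempty ι := Fintype.card_pos_iff.1 hι
  obtain ⟨x, hx⟩ := nonempty_of_density_pos (hδ.trans_le hA)
  exact ⟨Line.diagonal α ι, fun a ↦ by rwa [Subsingleton.elim (Line.diagonal α ι a) x]⟩

theorem densityHalesJewett (α : Type*) [Fintype α] : DensityHalesJewett α := by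
  refine Fintype.induction_empty_option (P := fun α _ ↦ DensityHalesJewett α)
    (fun α β _ e hα ↦ ?_) (densityHalesJewett_of_subsingleton _) (fun α _ hα ↦ ?_) α
  · let _ := Fintype.ofEquiv β e.symm
    exact hα.of_equiv e
  · rcases isEmpty_or_nonempty α
    · exact densityHalesJewett_of_subsingleton _
    · exact hα.option

/-! ### Supersaturation of arithmetic progressions -/

section Supersaturation

/-- The pairs `(a, d)` such that `a, a + d, …, a + (k - 1) d` is a progression inside `B`. The
bounds on `a` and `d` hold automatically when `2 ≤ k` and `B ⊆ {1, …, n}`. -/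
noncomputable def progressions (k n : ℕ) (B : Finset ℕ) : Finset (ℕ × ℕ) :=
  {q ∈ Icc 1 n ×ˢ Icc 1 n | ∀ i < k, q.1 + i * q.2 ∈ B}

lemma mem_progressions {k n : ℕ} {B : Finset ℕ} (hk : 2 ≤ k) (hB : B ⊆ Icc 1 n) {a d : ℕ} :
    (a, d) ∈ progressions k n B ↔ 0 < d ∧ ∀ i < k, a + i * d ∈ B := by
  rw [progressions, mem_filter, mem_product, mem_Icc, mem_Icc]
  refine ⟨fun h ↦ ⟨h.1.2.1, h.2⟩, fun ⟨_, h⟩ ↦ ⟨?_, h⟩⟩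
  have ha := mem_Icc.1 (hB (h 0 (by lia)))
  have had := mem_Icc.1 (hB (h 1 (by lia)))
  lia

lemma density_eq_card_div {X : Type*} [Fintype X] (A : Set X) :
    density A = #{x | x ∈ A} / Fintype.card X := by
  rw [density, Fintype.expect_eq_sum_div_card]
  simp [Set.indicator, Finset.sum_boole]

lemma sum_val_line_apply {ι : Type*} [Fintype ι] {k : ℕ} (L : Line (Fin k) ι) (i : Fin k) :
    ∑ r, (L i r : ℕ) = ∑ r, (L.idxFun r).elim 0 Fin.val + i * #{r | L.idxFun r = none} := by
  rw [card_filter, mul_sum, ← sum_add_distrib]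
  refine sum_congr rfl fun r _ ↦ ?_
  rcases hr : L.idxFun r with _ | a <;> simp [hr]

lemma card_le_card_setOf_add_mem_add {n : ℕ} {B : Finset ℕ} (hB : B ⊆ Icc 1 n) (s : ℕ) :
    #B ≤ #{y : Fin n | y + 1 + s ∈ B} + s := by
  have cover : B ⊆ image (fun y : Fin n ↦ y + 1 + s) {y : Fin n | y + 1 + s ∈ B} ∪ Icc 1 s := by
    intro b hb
    have hbn := mem_Icc.1 (hB hb)
    rw [mem_union, mem_image, mem_Icc]
    refine (le_or_gt b s).symm.imp (fun hs ↦ ?_) fun hs ↦ ⟨hbn.1, hs⟩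
    have hb' : b - s - 1 + 1 + s = b := by lia
    exact ⟨⟨b - s - 1, by lia⟩, mem_filter.2 ⟨mem_univ _, hb'.symm ▸ hb⟩, hb'⟩
  calc #B ≤ _ := card_le_card cover
    _ ≤ _ := card_union_le _ _
    _ ≤ _ := Nat.add_le_add card_image_le (by simp)

lemma half_le_density_setOf_add_mem {n : ℕ} (hn : 0 < n) {B : Finset ℕ} (hB : B ⊆ Icc 1 n) {ε : ℝ}
    (hcard : ε * n ≤ #B) {s : ℕ} (hs : s ≤ ε / 2 * n) :
    ε / 2 ≤ density {y : Fin n | y + 1 + s ∈ B} := by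
  rw [density_eq_card_div, Fintype.card_fin, le_div_iff₀ (mod_cast hn)]
  have : (#B : ℝ) ≤ #{y : Fin n | y + 1 + s ∈ B} + s := mod_cast card_le_card_setOf_add_mem_add hB s
  simp only [Set.mem_ofPred_eq]
  linarith

lemma half_le_expect_density_setOf_mem {ι : Type*} [Fintype ι] [DecidableEq ι] {k n D : ℕ} {ε : ℝ}
    (hk : 0 < k) (hn : 0 < n) (hD : 0 < D) (hDn : D * (Fintype.card ι * k) ≤ ε / 2 * n)
    {B : Finset ℕ} (hB : B ⊆ Icc 1 n) (hcard : ε * n ≤ #B) :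
    ε / 2 ≤ 𝔼 q : Fin n × Fin D,
      density {x : ι → Fin k | (q.1 : ℕ) + 1 + (q.2 + 1) * ∑ r, (x r : ℕ) ∈ B} := by
  have : NeZero D := ⟨hD.ne'⟩
  have : NeZero k := ⟨hk.ne'⟩
  have shift_le (x : ι → Fin k) (j : Fin D) :
      (((j + 1) * ∑ r, (x r : ℕ) : ℕ) : ℝ) ≤ ε / 2 * n := by
    refine le_trans ?_ hDn
    have : ∑ r, (x r : ℕ) ≤ Fintype.card ι * k :=
      (sum_le_card_nsmul _ _ k fun r _ ↦ (x r).2.le).trans_eq (by simp)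
    exact_mod_cast Nat.mul_le_mul j.2 this
  calc ε / 2 ≤ 𝔼 x : ι → Fin k, 𝔼 j : Fin D,
        density {y : Fin n | (y : ℕ) + 1 + ((j : ℕ) + 1) * ∑ r, (x r : ℕ) ∈ B} :=
        le_expect univ_nonempty fun x _ ↦ le_expect univ_nonempty fun j _ ↦
          half_le_density_setOf_add_mem hn hB hcard (shift_le x j)
    _ = _ := by
        refine (Eq.trans (expect_comm _ _ _) (expect_congr rfl fun x _ ↦ ?_)).symm
        rw [← univ_product_univ, expect_product]
        refine (expect_comm _ _ _).trans (expect_congr rfl fun j _ ↦ expect_congr rfl fun y _ ↦ ?_)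
        simp only [Set.indicator, Set.mem_ofPred_eq, Pi.one_apply]

/- A random map `x ↦ y + j (x₁ + ⋯ + xₘ)` sends every word to a nearly uniform element of
`{1, …, n}`, and lines to progressions. -/
lemma exists_line_density_setOf_mem_le {ι : Type*} [Fintype ι] [DecidableEq ι] {k n D : ℕ} {ε : ℝ}
    (hε : 0 < ε) (hk : 0 < k)
    (hline : ∀ A : Set (ι → Fin k), ε / 4 ≤ density A → ∃ L : Line (Fin k) ι, ∀ a, L a ∈ A)
    (hn : 0 < n) (hD : 0 < D) (hDn : D * (Fintype.card ι * k) ≤ ε / 2 * n) {B : Finset ℕ}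
    (hB : B ⊆ Icc 1 n) (hcard : ε * n ≤ #B) :
    ∃ L : Line (Fin k) ι, ε / 4 / Nat.card (Line (Fin k) ι) ≤
      density {q : Fin n × Fin D | ∀ i, (q.1 : ℕ) + 1 + (q.2 + 1) * ∑ r, (L i r : ℕ) ∈ B} := by
  have : NeZero n := ⟨hn.ne'⟩
  have : NeZero D := ⟨hD.ne'⟩
  have : NeZero k := ⟨hk.ne'⟩
  let words (q : Fin n × Fin D) : Set (ι → Fin k) :=
    {x | (q.1 : ℕ) + 1 + (q.2 + 1) * ∑ r, (x r : ℕ) ∈ B}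
  have avg : ε / 2 ≤ 𝔼 q, density (words q) :=
    half_le_expect_density_setOf_mem hk hn hD hDn hB hcard
  have dense : ε / 4 ≤ density {q | ε / 4 ≤ density (words q)} := by
    have := sub_le_density_setOf_le (fun q ↦ density_le_one (words q)) (t := ε / 4) (by positivity)
    linarith
  obtain ⟨L, hL⟩ := exists_density_div_card_le
    (B := fun L : Line (Fin k) ι ↦ {q | ∀ i, L i ∈ words q})
    ((by positivity : 0 < ε / 4).trans_le dense) fun q hq ↦ Set.mem_iUnion.2 (hline _ hq)
  exact ⟨L, le_trans (by gcongr) hL⟩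

lemma card_setOf_mem_le_card_progressions {ι : Type*} [Fintype ι] {k n D : ℕ} (hk : 2 ≤ k)
    {B : Finset ℕ} (hB : B ⊆ Icc 1 n) (L : Line (Fin k) ι) :
    #{q : Fin n × Fin D | ∀ i, (q.1 : ℕ) + 1 + (q.2 + 1) * ∑ r, (L i r : ℕ) ∈ B} ≤
      #(progressions k n B) := by
  let s := ∑ r, (L.idxFun r).elim 0 Fin.val
  let t := #{r | L.idxFun r = none}
  have ht : 0 < t := card_pos.2 (by simpa [Finset.Nonempty] using L.proper)
  refine card_le_card_of_injOn (fun q ↦ (q.1 + 1 + (q.2 + 1) * s, (q.2 + 1) * t))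
    (fun q hq ↦ ?_) fun q _ q' _ h ↦ ?_
  · refine (mem_progressions hk hB).2 ⟨by positivity, fun i hi ↦ ?_⟩
    have := (mem_filter.1 hq).2 ⟨i, hi⟩
    rw [sum_val_line_apply] at this
    convert this using 1
    ring
  · obtain ⟨h₁, h₂⟩ := Prod.mk.injEq .. ▸ h
    have hj : (q.2 : ℕ) = q'.2 := Nat.succ_injective (Nat.eq_of_mul_eq_mul_right ht h₂)
    rw [hj] at h₁
    exact Prod.ext (Fin.ext (by lia)) (Fin.ext hj)

lemma exists_pos_forall_floor_bounds {ε : ℝ} (hε : 0 < ε) {M : ℝ} (hM : 0 ≤ M) :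
    ∃ η > (0 : ℝ), ∃ n₀ : ℕ, ∀ n ≥ n₀, ∃ D : ℕ, 0 < D ∧ η * n ≤ D ∧ D * M ≤ ε * n := by
  have hη : 0 < ε / (M + 1) := by positivity
  obtain ⟨n₀, hn₀⟩ := exists_nat_gt (2 / (ε / (M + 1)))
  refine ⟨ε / (M + 1) / 2, half_pos hη, n₀, fun n hn ↦ ⟨⌊ε / (M + 1) * n⌋₊, ?_⟩⟩
  have hn' : 2 < ε / (M + 1) * n := by
    rw [← div_lt_iff₀' hη]
    exact hn₀.trans_le (mod_cast hn)
  have le_floor := Nat.lt_floor_add_one (ε / (M + 1) * n)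
  refine ⟨Nat.floor_pos.2 (by linarith), by linarith, ?_⟩
  calc ⌊ε / (M + 1) * n⌋₊ * M ≤ ε / (M + 1) * n * (M + 1) := by
        gcongr
        · exact Nat.floor_le (by linarith)
        · linarith
    _ = ε * n := by field_simp

theorem exists_mul_sq_le_card_progressions {k : ℕ} (hk : 2 ≤ k) {ε : ℝ} (hε : 0 < ε) :
    ∃ c > (0 : ℝ), ∃ n₀ : ℕ, ∀ n ≥ n₀, ∀ B ⊆ Icc 1 n, ε * n ≤ #B →
      c * n ^ 2 ≤ #(progressions k n B) := by
  obtain ⟨m, hm⟩ := densityHalesJewett (Fin k) (ε / 4) (by positivity)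
  obtain ⟨η, hη, n₀, hD⟩ := exists_pos_forall_floor_bounds (half_pos hε)
    (show (0 : ℝ) ≤ Fintype.card (Fin (m + 1)) * k by positivity)
  have card_pos : (0 : ℝ) < Nat.card (Line (Fin k) (Fin (m + 1))) := mod_cast Nat.card_pos
  refine ⟨ε / 4 / Nat.card (Line (Fin k) (Fin (m + 1))) * η, by positivity, max n₀ 1,
    fun n hn B hB hcard ↦ ?_⟩
  have hn_pos : 0 < n := (le_max_right n₀ 1).trans hn
  obtain ⟨D, hD_pos, hDη, hDn⟩ := hD n ((le_max_left _ _).trans hn)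
  obtain ⟨L, hL⟩ := exists_line_density_setOf_mem_le hε (by lia) (hm (Fin (m + 1)) (by simp))
    hn_pos hD_pos hDn hB hcard
  rw [density_eq_card_div, Fintype.card_prod, Fintype.card_fin, Fintype.card_fin,
    le_div_iff₀ (by positivity)] at hL
  simp only [Set.mem_ofPred_eq] at hL
  calc _ = ε / 4 / Nat.card (Line (Fin k) (Fin (m + 1))) * (n * (η * n)) := by ring
    _ ≤ ε / 4 / Nat.card (Line (Fin k) (Fin (m + 1))) * (n * D) := by gcongr
    _ ≤ _ := mod_cast hL
    _ ≤ _ := mod_cast card_setOf_mem_le_card_progressions hk hB L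

end Supersaturation

/-! ### Hypergraph containers -/

section HasContainers

variable {α : Type*} {V : Finset α} {P Q : Finset α → Prop} {q q' M M' : ℝ}

/-- Every `I ⊆ V` satisfying `P` contains a fingerprint `F` of size at most `q` that determines a
container `g F ⊇ I` of size at most `M`. The container does not change when `F` is enlarged inside
`I`, so that the fingerprints of successive container constructions can be merged. -/
def HasContainers (V : Finset α) (P : Finset α → Prop) (q M : ℝ) : Prop :=
  ∃ g : Finset α → Finset α, (∀ F, g F ⊆ V ∧ #(g F) ≤ M) ∧
    ∀ I ⊆ V, P I → ∃ F ⊆ I, #F ≤ q ∧ I ⊆ g F ∧ ∀ F', F ⊆ F' → F' ⊆ I → g F' = g F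

lemma HasContainers.mono (h : HasContainers V P q M) (hP : ∀ I, Q I → P I) (hq : q ≤ q')
    (hM : M ≤ M') : HasContainers V Q q' M' := by
  obtain ⟨g, hg, hfp⟩ := h
  refine ⟨g, fun F ↦ ⟨(hg F).1, (hg F).2.trans hM⟩, fun I hI hQ ↦ ?_⟩
  obtain ⟨F, hFI, hF, hIg, hstable⟩ := hfp I hI (hP I hQ)
  exact ⟨F, hFI, hF.trans hq, hIg, hstable⟩

lemma hasContainers_of_forall_subset {C : Finset α} (hC : C ⊆ V) (hP : ∀ I ⊆ V, P I → I ⊆ C)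
    (hq : 0 ≤ q) (hM : #C ≤ M) : HasContainers V P q M :=
  ⟨fun _ ↦ C, fun _ ↦ ⟨hC, hM⟩, fun I hI hPI ↦
    ⟨∅, empty_subset I, by simpa using hq, hP I hI hPI, fun _ _ _ ↦ rfl⟩⟩

lemma HasContainers.trans (h : HasContainers V P q M)
    (h' : ∀ C ⊆ V, #C ≤ M → HasContainers C P q' M') : HasContainers V P (q + q') M' := by
  obtain ⟨g, hg, hfp⟩ := h
  choose g' hg' hfp' using h'
  refine ⟨fun F ↦ g' (g F) (hg F).1 (hg F).2 F,
    fun F ↦ ⟨(hg' _ _ _ F).1.trans (hg F).1, (hg' _ _ _ F).2⟩, fun I hI hP ↦ ?_⟩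
  obtain ⟨F₁, hF₁I, hF₁, hIg, hstable₁⟩ := hfp I hI hP
  obtain ⟨F₂, hF₂I, hF₂, hIg', hstable₂⟩ := hfp' (g F₁) (hg F₁).1 (hg F₁).2 I hIg hP
  have container_eq (F) (hF : F₁ ∪ F₂ ⊆ F) (hFI : F ⊆ I) :
      g' (g F) (hg F).1 (hg F).2 F = g' (g F₁) (hg F₁).1 (hg F₁).2 F₂ := by
    simp only [hstable₁ F (union_subset_left hF) hFI]
    exact hstable₂ F (union_subset_right hF) hFI
  have hFI := union_subset hF₁I hF₂I
  refine ⟨F₁ ∪ F₂, hFI, ?_, ?_, fun F hF hFI' ↦ ?_⟩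
  · have : (#(F₁ ∪ F₂) : ℝ) ≤ #F₁ + #F₂ := mod_cast card_union_le _ _
    linarith
  · exact hIg'.trans_eq (container_eq _ Subset.rfl hFI).symm
  · exact (container_eq F hF hFI').trans (container_eq _ Subset.rfl hFI).symm

lemma hasContainers_of_forall_lt_card {W : Finset α} {r : ℝ} (hr : 0 ≤ r) (hq : 0 ≤ q)
    (step : ∀ X ⊆ W, M < #X → HasContainers X P q (r * #X)) (j : ℕ) :
    ∀ X ⊆ W, #X * r ^ j ≤ M → HasContainers X P (j * q) M := by
  induction j with
  | zero =>
    exact fun X _ hX ↦ hasContainers_of_forall_subset Subset.rfl (fun I hI _ ↦ hI) (by simp)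
      (by simpa using hX)
  | succ j ih =>
    intro X hXW hX
    by_cases hsmall : #X ≤ M
    · exact hasContainers_of_forall_subset Subset.rfl (fun I hI _ ↦ hI) (by positivity) hsmall
    refine ((step X hXW (not_le.1 hsmall)).trans fun C hC hCr ↦ ih C (hC.trans hXW) ?_).mono
      (fun _ ↦ id) (by push_cast; linarith) le_rfl
    calc #C * r ^ j ≤ r * #X * r ^ j := by gcongr
      _ = #X * r ^ (j + 1) := by ring
      _ ≤ M := hX

/- The least element of `I` in `U` is added to the fingerprint: it is also the least element in `U`
of every fingerprint `F ⊆ I` containing it. -/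
lemma hasContainers_of_forall_mem [LinearOrder α] {U : Finset α} {P : α → Finset α → Prop}
    (hq : 0 ≤ q) (hU : #(V \ U) ≤ M) (h : ∀ v ∈ U, HasContainers V (P v) q M) :
    HasContainers V (fun I ↦ ∀ v ∈ I, P v I) (q + 1) M := by
  choose g hg hfp using h
  let container (F : Finset α) : Finset α :=
    if h : ∃ v, IsLeast (F ∩ U : Set α) v then g _ h.choose_spec.1.2 F else V \ U
  have container_eq {v : α} (hv : v ∈ U) {F : Finset α} (hmin : IsLeast (F ∩ U : Set α) v) :
      container F = g v hv F := by
    have h : ∃ v, IsLeast (F ∩ U : Set α) v := ⟨v, hmin⟩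
    have : h.choose = v := h.choose_spec.unique hmin
    simp only [container, dif_pos h, this]
  refine ⟨container, fun F ↦ ?_, fun I hI hP ↦ ?_⟩
  · by_cases hF : ∃ v, IsLeast (F ∩ U : Set α) v
    · obtain ⟨v, hv⟩ := hF
      rw [container_eq hv.1.2 hv]
      exact hg _ _ F
    · rw [show container F = V \ U from dif_neg hF]
      exact ⟨sdiff_subset, hU⟩
  rcases (I ∩ U : Set α).eq_empty_or_nonempty with hIU | hIU
  · have stable (F) (hF : F ⊆ I) : container F = V \ U :=
      dif_neg fun ⟨v, hv⟩ ↦ hIU.subset ⟨hF hv.1.1, hv.1.2⟩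
    refine ⟨∅, empty_subset I, by simpa using by positivity, ?_, fun F' _ hF'I ↦ ?_⟩
    · rw [stable ∅ (empty_subset I)]
      exact fun v hv ↦ mem_sdiff.2 ⟨hI hv, fun hvU ↦ hIU.subset ⟨hv, hvU⟩⟩
    · rw [stable F' hF'I, stable ∅ (empty_subset I)]
  · obtain ⟨v, hv, hmin⟩ := Set.exists_min_image _ id (I.finite_toSet.inter_of_left U) hIU
    obtain ⟨F, hFI, hF, hIg, hstable⟩ := hfp v hv.2 I hI (hP v hv.1)
    have stable (F') (hF' : insert v F ⊆ F') (hF'I : F' ⊆ I) : container F' = g v hv.2 F := by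
      obtain ⟨hvF', hFF'⟩ := insert_subset_iff.1 hF'
      rw [← hstable F' hFF' hF'I]
      exact container_eq hv.2 ⟨⟨hvF', hv.2⟩, fun w hw ↦ hmin w ⟨hF'I hw.1, hw.2⟩⟩
    have hinsert : insert v F ⊆ I := insert_subset_iff.2 ⟨hv.1, hFI⟩
    refine ⟨insert v F, hinsert, ?_, ?_, fun F' hF' hF'I ↦ ?_⟩
    · have : (#(insert v F) : ℝ) ≤ #F + 1 := mod_cast card_insert_le v F
      linarith
    · rwa [stable _ Subset.rfl hinsert]
    · rw [stable F' hF' hF'I, stable _ Subset.rfl hinsert]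

end HasContainers

section Hypergraph

variable {α : Type*}

/-- The number of edges of the hypergraph `H` that contain `T`. -/
noncomputable def setDegree (H : Finset (Finset α)) (T : Finset α) : ℕ := #{e ∈ H | T ⊆ e}

/-- No edge of `H` is contained in `I`. -/
def IsIndependent (H : Finset (Finset α)) (I : Finset α) : Prop := ∀ e ∈ H, ¬ e ⊆ I

/-- The link of the vertex `v`: the edges of `H` through `v`, with `v` removed. -/
noncomputable def link (H : Finset (Finset α)) (v : α) : Finset (Finset α) :=
  {e ∈ H | v ∈ e}.image (·.erase v)

/-- `H` is an `s`-uniform hypergraph on `V` in which the degree of a nonempty set `T` is at most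
`K τ ^ (#T - s)`. -/
structure IsBalanced (V : Finset α) (τ : ℝ) (s : ℕ) (K : ℝ) (H : Finset (Finset α)) : Prop where
  subset : ∀ e ∈ H, e ⊆ V
  card_eq : ∀ e ∈ H, #e = s
  setDegree_mul_le : ∀ T : Finset α, T.Nonempty → setDegree H T * τ ^ s ≤ K * τ ^ #T

/-- The edges of `H` none of whose nonempty subsets has `L`-degree at least `τ ^ (#T - s)`. -/
noncomputable def unsaturated (τ : ℝ) (s : ℕ) (H L : Finset (Finset α)) : Finset (Finset α) :=
  {e ∈ H | ∀ T ⊆ e, T.Nonempty → setDegree L T * τ ^ s < τ ^ #T}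

variable {τ : ℝ} {s : ℕ} {H L R : Finset (Finset α)} {V : Finset α} {K : ℝ} {v : α}

lemma exists_superset_mem_of_setDegree_pos {T : Finset α} (h : 0 < setDegree H T) :
    ∃ e ∈ H, T ⊆ e :=
  (card_pos.1 h).imp fun _ he ↦ mem_filter.1 he

lemma setDegree_le_card {β : Type*} {T : Finset α} {t : Finset β} (f : β → Finset α)
    (h : ∀ e ∈ H, T ⊆ e → ∃ b ∈ t, f b = e) : setDegree H T ≤ #t :=
  card_le_card_of_surjOn f fun e he ↦ h e (mem_filter.1 he).1 (mem_filter.1 he).2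

lemma setDegree_mono (h : L ⊆ H) (T : Finset α) : setDegree L T ≤ setDegree H T :=
  card_le_card (filter_subset_filter _ h)

lemma mem_link {e : Finset α} : e ∈ link H v ↔ v ∉ e ∧ insert v e ∈ H := by
  rw [link, mem_image]
  constructor
  · rintro ⟨f, hf, rfl⟩
    rw [mem_filter] at hf
    exact ⟨notMem_erase v f, (insert_erase hf.2).symm ▸ hf.1⟩
  · exact fun h ↦ ⟨insert v e, mem_filter.2 ⟨h.2, mem_insert_self v e⟩, erase_insert h.1⟩

lemma setDegree_link_le (T : Finset α) : setDegree (link H v) T ≤ setDegree H (insert v T) := by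
  refine card_le_card_of_injOn (insert v) (fun e he ↦ ?_) fun e he e' he' h ↦ ?_
  · rw [mem_coe, mem_filter, mem_link] at he
    exact mem_coe.2 (mem_filter.2 ⟨he.1.2, insert_subset_insert v he.2⟩)
  · rw [mem_coe, mem_filter, mem_link] at he he'
    rw [← erase_insert he.1.1, h, erase_insert he'.1.1]

lemma card_link : #(link H v) = setDegree H {v} := by
  rw [link, setDegree, card_image_of_injOn]
  · simp only [singleton_subset_iff]
  · exact fun e he e' he' h ↦ (mem_filter.1 he).2 |> fun hv ↦ by
      rw [← insert_erase hv, h, insert_erase (mem_filter.1 he').2]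

lemma IsIndependent.union_link {I : Finset α} (hL : IsIndependent L I) (hI : IsIndependent H I)
    (hR : R ⊆ H) (hv : v ∈ I) : IsIndependent (L ∪ link R v) I := by
  intro e he heI
  rcases mem_union.1 he with he | he
  · exact hL e he heI
  · exact hI _ (hR (mem_link.1 he).2) (insert_subset_iff.2 ⟨hv, heI⟩)

lemma unsaturated_subset : unsaturated τ s H L ⊆ H := filter_subset _ _

lemma disjoint_link_unsaturated (hτ : 0 < τ) (hs : 0 < s) (hL : ∀ e ∈ L, #e = s) :
    Disjoint L (link (unsaturated τ s H L) v) := by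
  refine disjoint_left.2 fun e heL hlink ↦ ?_
  have he := (mem_filter.1 (mem_link.1 hlink).2).2 e (subset_insert v e)
    (card_pos.1 (hs.trans_eq (hL e heL).symm))
  rw [hL e heL] at he
  have : (1 : ℝ) ≤ setDegree L e := mod_cast card_pos.2 ⟨e, mem_filter.2 ⟨heL, Subset.rfl⟩⟩
  exact he.not_ge (le_mul_of_one_le_left (by positivity) this)

lemma setDegree_union_le (T : Finset α) :
    setDegree (H ∪ L) T ≤ setDegree H T + setDegree L T := by
  rw [setDegree, filter_union]
  exact card_union_le _ _

lemma IsBalanced.union_link_unsaturated (hτ : 0 < τ) (hH : IsBalanced V τ (s + 1) K H)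
    (hL : IsBalanced V τ s (K + 1) L) (v : α) :
    IsBalanced V τ s (K + 1) (L ∪ link (unsaturated τ s H L) v) := by
  refine ⟨fun e he ↦ ?_, fun e he ↦ ?_, fun T hT ↦ ?_⟩
  · rcases mem_union.1 he with he | he
    · exact hL.subset e he
    · exact (subset_insert v e).trans (hH.subset _ (unsaturated_subset (mem_link.1 he).2))
  · rcases mem_union.1 he with he | he
    · exact hL.card_eq e he
    · have := hH.card_eq _ (unsaturated_subset (mem_link.1 he).2)
      rwa [card_insert_of_notMem (mem_link.1 he).1, add_left_inj] at this
  have union_le : (setDegree (L ∪ link (unsaturated τ s H L) v) T : ℝ) ≤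
      setDegree L T + setDegree (link (unsaturated τ s H L) v) T := mod_cast setDegree_union_le T
  rcases (setDegree (link (unsaturated τ s H L) v) T).eq_zero_or_pos with hzero | hpos
  · rw [hzero, Nat.cast_zero, add_zero] at union_le
    exact (mul_le_mul_of_nonneg_right union_le (by positivity)).trans (hL.setDegree_mul_le T hT)
  · obtain ⟨e, he⟩ := card_pos.1 hpos
    obtain ⟨helink, hTe⟩ := mem_filter.1 he
    obtain ⟨hve, heR⟩ := mem_link.1 helink
    have degree_L := (mem_filter.1 heR).2 T (hTe.trans (subset_insert v e)) hT
    have degree_link : (setDegree (link (unsaturated τ s H L) v) T : ℝ) ≤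
        setDegree H (insert v T) :=
      mod_cast (setDegree_link_le T).trans (setDegree_mono unsaturated_subset _)
    have degree_H := hH.setDegree_mul_le (insert v T) (insert_nonempty v T)
    rw [card_insert_of_notMem fun hvT ↦ hve (hTe hvT), pow_succ, pow_succ, ← mul_assoc,
      ← mul_assoc] at degree_H
    calc _ ≤ (setDegree L T + setDegree H (insert v T)) * τ ^ s := by gcongr; linarith
      _ ≤ (K + 1) * τ ^ #T := by linarith [le_of_mul_le_mul_right degree_H hτ]

lemma sum_setDegree_powerset_le (hL : ∀ e ∈ L, #e = s) :
    ∑ T ∈ V.powerset, setDegree L T ≤ #L * 2 ^ s := by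
  simp only [setDegree, card_filter]
  rw [sum_comm]
  refine sum_le_card_nsmul _ _ (2 ^ s) fun e he ↦ ?_
  rw [← card_filter, ← hL e he, ← card_powerset]
  exact card_le_card fun T hT ↦ mem_powerset.2 (mem_filter.1 hT).2

lemma card_le_sum_setDegree_singleton (hV : ∀ e ∈ H, e ⊆ V) (hne : ∀ e ∈ H, e.Nonempty) :
    #H ≤ ∑ v ∈ V, setDegree H {v} := by
  simp only [setDegree, card_filter]
  rw [sum_comm, card_eq_sum_ones]
  refine sum_le_sum fun e he ↦ ?_
  obtain ⟨v, hv⟩ := hne e he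
  rw [← card_filter]
  exact card_pos.2 ⟨v, mem_filter.2 ⟨hV e he hv, singleton_subset_iff.2 hv⟩⟩

lemma card_le_card_unsaturated_add (hV : ∀ e ∈ H, e ⊆ V) :
    #H ≤ #(unsaturated τ s H L) +
      ∑ T ∈ V.powerset with T.Nonempty ∧ τ ^ #T ≤ setDegree L T * τ ^ s, setDegree H T := by
  have cover : H ⊆ unsaturated τ s H L ∪ {T ∈ V.powerset | T.Nonempty ∧
      τ ^ #T ≤ setDegree L T * τ ^ s}.biUnion fun T ↦ {e ∈ H | T ⊆ e} := by
    intro e he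
    by_contra hcover
    simp only [mem_union, mem_biUnion, mem_filter, mem_powerset, not_or, not_exists] at hcover
    refine hcover.1 (mem_filter.2 ⟨he, fun T hTe hT ↦ not_le.1 fun hle ↦ ?_⟩)
    exact hcover.2 T ⟨⟨hTe.trans (hV e he), hT, hle⟩, he, hTe⟩
  calc #H ≤ _ := card_le_card cover
    _ ≤ _ := card_union_le _ _
    _ ≤ _ := Nat.add_le_add_left card_biUnion_le _

lemma IsBalanced.card_mul_le (hτ : 0 < τ) (hK : 0 ≤ K) (hH : IsBalanced V τ (s + 1) K H)
    (hL : ∀ e ∈ L, #e = s) :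
    #H * τ ≤ #(unsaturated τ s H L) * τ + K * 2 ^ s * #L := by
  let saturated : Finset (Finset α) :=
    {T ∈ V.powerset | T.Nonempty ∧ τ ^ #T ≤ setDegree L T * τ ^ s}
  have degree_le : ∀ T ∈ saturated, setDegree H T * τ ≤ K * setDegree L T := by
    intro T hT
    obtain ⟨-, hT_ne, hT_sat⟩ := mem_filter.1 hT
    refine le_of_mul_le_mul_right ?_ (show 0 < τ ^ s by positivity)
    calc setDegree H T * τ * τ ^ s = setDegree H T * τ ^ (s + 1) := by ring
      _ ≤ K * τ ^ #T := hH.setDegree_mul_le T hT_ne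
      _ ≤ K * (setDegree L T * τ ^ s) := by gcongr
      _ = _ := by ring
  have sum_le : ∑ T ∈ saturated, (setDegree L T : ℝ) ≤ #L * 2 ^ s :=
    mod_cast (sum_le_sum_of_subset (filter_subset _ _)).trans (sum_setDegree_powerset_le hL)
  have card_le : (#H : ℝ) ≤ #(unsaturated τ s H L) + ∑ T ∈ saturated, (setDegree H T : ℝ) :=
    mod_cast card_le_card_unsaturated_add hH.subset
  calc #H * τ ≤ #(unsaturated τ s H L) * τ + ∑ T ∈ saturated, setDegree H T * τ := by
        rw [← sum_mul, ← add_mul]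
        gcongr
    _ ≤ #(unsaturated τ s H L) * τ + K * ∑ T ∈ saturated, (setDegree L T : ℝ) := by
        rw [mul_sum]
        exact add_le_add le_rfl (sum_le_sum degree_le)
    _ ≤ #(unsaturated τ s H L) * τ + K * (#L * 2 ^ s) := by gcongr
    _ = _ := by ring

lemma sum_le_card_filter_le_mul_add {w : α → ℝ} {a : ℝ} (ha : 0 ≤ a) (hw : ∀ v ∈ V, w v ≤ K) :
    ∑ v ∈ V, w v ≤ #{v ∈ V | a ≤ w v} * K + #V * a := by
  rw [← sum_filter_add_sum_filter_not V (a ≤ w ·)]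
  gcongr
  · exact (sum_le_card_nsmul _ _ K fun v hv ↦ hw v (mem_filter.1 hv).1).trans_eq (nsmul_eq_mul _ _)
  · calc _ ≤ #{v ∈ V | ¬ a ≤ w v} • a :=
          sum_le_card_nsmul _ _ a fun v hv ↦ (not_le.1 (mem_filter.1 hv).2).le
      _ ≤ #V * a := by
          rw [nsmul_eq_mul]
          gcongr
          exact filter_subset _ _

/-- The vertices whose unsaturated degree is large enough for their links to increase `L`. -/
noncomputable def heavyVertices (V : Finset α) (τ : ℝ) (s : ℕ) (H L : Finset (Finset α)) (c : ℝ) :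
    Finset α :=
  {v ∈ V | c / 4 ≤ setDegree (unsaturated τ s H L) {v} * τ ^ s}

lemma IsBalanced.mul_card_le_card_heavyVertices (hτ : 0 < τ) (hK : 0 < K)
    (hH : IsBalanced V τ (s + 1) K H) (hL : ∀ e ∈ L, #e = s) {c : ℝ} (hc : 0 ≤ c)
    (hH_card : c * (#V * τ) ≤ #H * τ ^ (s + 1))
    (hL_card : K * 2 ^ s * (#L * τ ^ s) ≤ c / 2 * (#V * τ)) :
    c / (4 * K) * #V ≤ #(heavyVertices V τ s H L c) := by
  have many_unsaturated : c / 2 * #V ≤ #(unsaturated τ s H L) * τ ^ s := by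
    have := mul_le_mul_of_nonneg_right (hH.card_mul_le hτ hK.le hL) (pow_pos hτ s).le
    refine le_of_mul_le_mul_right ?_ hτ
    rw [pow_succ] at hH_card
    linarith
  have degree_sum : (#(unsaturated τ s H L) : ℝ) ≤
      ∑ v ∈ V, (setDegree (unsaturated τ s H L) {v} : ℝ) :=
    mod_cast card_le_sum_setDegree_singleton (fun e he ↦ hH.subset e (unsaturated_subset he))
      fun e he ↦ card_pos.1 ((hH.card_eq e (unsaturated_subset he)).symm ▸ s.succ_pos)
  have degree_le (v : α) : setDegree (unsaturated τ s H L) {v} * τ ^ s ≤ K := by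
    have := hH.setDegree_mul_le {v} (singleton_nonempty v)
    rw [card_singleton, pow_one, pow_succ, ← mul_assoc] at this
    refine le_trans ?_ (le_of_mul_le_mul_right this hτ)
    gcongr
    exact setDegree_mono unsaturated_subset _
  have markov := sum_le_card_filter_le_mul_add (V := V) (a := c / 4) (by positivity)
    fun v _ ↦ degree_le v
  rw [← sum_mul] at markov
  have := mul_le_mul_of_nonneg_right degree_sum (pow_pos hτ s).le
  rw [div_mul_eq_mul_div, div_le_iff₀ (by positivity), heavyVertices]
  linarith

lemma IsBalanced.hasContainers_one {c : ℝ} (hτ : 0 < τ) (hH : IsBalanced V τ 1 K H)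
    (hH_card : c * (#V * τ) ≤ #H * τ) :
    HasContainers V (IsIndependent H) 0 ((1 - c) * #V) := by
  refine hasContainers_of_forall_subset (C := {v ∈ V | {v} ∉ H}) (filter_subset _ _)
    (fun I hI hindep v hv ↦ mem_filter.2 ⟨hI hv, fun hvH ↦ hindep _ hvH (by simpa using hv)⟩)
    le_rfl ?_
  have card_le : #H ≤ #{v ∈ V | {v} ∈ H} := by
    refine (card_le_card (t := {v ∈ V | {v} ∈ H}.image singleton) fun e he ↦ ?_).trans
      card_image_le
    obtain ⟨v, rfl⟩ := card_eq_one.1 (hH.card_eq e he)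
    exact mem_image_of_mem _ (mem_filter.2 ⟨singleton_subset_iff.1 (hH.subset _ he), he⟩)
  have card_add := card_filter_add_card_filter_not (s := V) fun v ↦ {v} ∈ H
  have hle : c * #V ≤ #H := le_of_mul_le_mul_right (by linarith) hτ
  rify at card_le card_add
  linarith

end Hypergraph

section Containers

variable {α : Type*} [LinearOrder α] {τ : ℝ} {s : ℕ} {H : Finset (Finset α)} {V : Finset α} {K : ℝ}

/- The `s`-uniform hypergraph `L` collects links of vertices of `I`, so `I` remains independent in
it. As long as `L` is small, there are many heavy vertices: either `I` avoids them all, or adding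
the link of one of them increases `L`. -/
lemma IsBalanced.hasContainers_and (hτ : 0 < τ) (hK : 0 < K) (hs : 0 < s)
    (hH : IsBalanced V τ (s + 1) K H) {c x q M : ℝ} (hc : 0 ≤ c) (hq : 0 ≤ q)
    (hH_card : c * (#V * τ) ≤ #H * τ ^ (s + 1)) (hx : K * 2 ^ s * x ≤ c / 2)
    (hM : (1 - c / (4 * K)) * #V ≤ M)
    (hnext : ∀ L, IsBalanced V τ s (K + 1) L → x * (#V * τ) ≤ #L * τ ^ s →
      HasContainers V (IsIndependent L) q M) (N : ℕ) :
    ∀ L, IsBalanced V τ s (K + 1) L → x * (#V * τ) ≤ #L * τ ^ s + N * (c / 4) →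
      HasContainers V (fun I ↦ IsIndependent H I ∧ IsIndependent L I) (q + N) M := by
  induction N with
  | zero =>
    exact fun L hL hL_card ↦ (hnext L hL (by simpa using hL_card)).mono (fun _ ↦ And.right)
      (by simp) le_rfl
  | succ N ih =>
    intro L hL hL_card
    by_cases hlarge : x * (#V * τ) ≤ #L * τ ^ s
    · exact (hnext L hL hlarge).mono (fun _ ↦ And.right) (by
      push_cast
      linarith [N.cast_nonneg (α := ℝ)]) le_rfl
    let U := heavyVertices V τ s H L c
    have card_sdiff_le : #(V \ U) ≤ M := by
      have hL_small : K * 2 ^ s * (#L * τ ^ s) ≤ c / 2 * (#V * τ) :=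
        calc K * 2 ^ s * (#L * τ ^ s) ≤ K * 2 ^ s * (x * (#V * τ)) := by
              gcongr K * 2 ^ s * ?_
              exact (not_le.1 hlarge).le
          _ = K * 2 ^ s * x * (#V * τ) := by ring
          _ ≤ _ := by gcongr
      have : c / (4 * K) * #V ≤ #U :=
        hH.mul_card_le_card_heavyVertices hτ hK hL.card_eq hc hH_card hL_small
      rw [cast_card_sdiff (show U ⊆ V from filter_subset _ _)]
      linarith
    have card_union_link {v : α} (hv : v ∈ U) : x * (#V * τ) ≤
        #(L ∪ link (unsaturated τ s H L) v) * τ ^ s + N * (c / 4) := by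
      have := (mem_filter.1 hv).2
      rw [card_union_of_disjoint (disjoint_link_unsaturated hτ hs hL.card_eq), card_link]
      push_cast at hL_card ⊢
      linarith
    refine (hasContainers_of_forall_mem (by positivity) card_sdiff_le fun v hv ↦
      ih _ (hH.union_link_unsaturated hτ hL v) (card_union_link hv)).mono
        (fun I hI v hv ↦ ⟨hI.1, hI.2.union_link hI.1 unsaturated_subset hv⟩)
        (by push_cast; linarith) le_rfl

theorem exists_hasContainers_of_isBalanced (s : ℕ) {K c : ℝ} (hK : 0 < K) (hc : 0 < c) :
    ∃ C η : ℝ, 0 ≤ C ∧ 0 < η ∧ ∀ (V : Finset α) (τ : ℝ) (H : Finset (Finset α)), 0 < τ →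
      1 ≤ #V * τ → IsBalanced V τ (s + 1) K H → c * (#V * τ) ≤ #H * τ ^ (s + 1) →
      HasContainers V (IsIndependent H) (C * (#V * τ)) ((1 - η) * #V) := by
  induction s generalizing K c with
  | zero =>
    exact ⟨0, c, le_rfl, hc, fun V τ H hτ _ hH hH_card ↦
      (hH.hasContainers_one hτ (by simpa using hH_card)).mono (fun _ ↦ id) (by simp) le_rfl⟩
  | succ s ih =>
    let x := c / (2 * (K * 2 ^ (s + 1)))
    have hx : 0 < x := by positivity
    obtain ⟨C, η, hC, hη, hcont⟩ := ih (show 0 < K + 1 by positivity) hx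
    refine ⟨C + (4 * x / c + 1), min η (c / (4 * K)), by positivity, by positivity, ?_⟩
    intro V τ H hτ hV hH hH_card
    let N := ⌈4 * x / c * (#V * τ)⌉₊
    have hN : (N : ℝ) < 4 * x / c * (#V * τ) + 1 := Nat.ceil_lt_add_one (by positivity)
    have hN' : x * (#V * τ) ≤ N * (c / 4) :=
      calc x * (#V * τ) = 4 * x / c * (#V * τ) * (c / 4) := by field_simp
        _ ≤ N * (c / 4) := by gcongr; exact Nat.le_ceil _
    have empty_balanced : IsBalanced V τ (s + 1) (K + 1) ∅ := by
      refine ⟨by simp, by simp, fun T _ ↦ ?_⟩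
      rw [setDegree, filter_empty, card_empty, Nat.cast_zero, zero_mul]
      positivity
    refine (hH.hasContainers_and hτ hK s.succ_pos hc.le (x := x) (q := C * (#V * τ))
      (M := (1 - min η (c / (4 * K))) * #V) (by positivity) hH_card
      (by simp only [x]; field_simp; rfl) (by gcongr; exact min_le_right _ _)
      (fun L hL hL_card ↦ ?_) N ∅ empty_balanced (by simpa using hN')).mono
      (fun I hI ↦ ⟨hI, by simp [IsIndependent]⟩) ?_ le_rfl
    · exact (hcont V τ L hτ hV hL hL_card).mono (fun _ ↦ id) le_rfl
        (by gcongr; exact min_le_left _ _)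
    · linarith

end Containers

/-! ### Containers for sets without arithmetic progressions -/

section ArithmeticProgressions

variable {k n a d a' d' : ℕ} {X T I : Finset ℕ}

/-- The arithmetic progression of length `k` with first term `a` and difference `d`. -/
def arithProg (k a d : ℕ) : Finset ℕ := (range k).image fun i ↦ a + i * d

/-- The hypergraph on `X` whose edges are the progressions of length `k` inside `X`, where
`X ⊆ {1, …, n}`. -/
noncomputable def progHypergraph (k n : ℕ) (X : Finset ℕ) : Finset (Finset ℕ) :=
  (progressions k n X).image fun q ↦ arithProg k q.1 q.2

/-- `I` contains no progression of length `k` of positive integers. -/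
def IsProgFree (k : ℕ) (I : Finset ℕ) : Prop :=
  ∀ a d, 0 < a → 0 < d → ∃ i < k, a + i * d ∉ I

lemma mem_arithProg {x : ℕ} : x ∈ arithProg k a d ↔ ∃ i < k, a + i * d = x := by
  simp [arithProg]

lemma card_arithProg (hd : 0 < d) : #(arithProg k a d) = k := by
  rw [arithProg, card_image_of_injective, card_range]
  exact fun i j hij ↦ Nat.eq_of_mul_eq_mul_right hd (Nat.add_left_cancel hij)

lemma pos_of_mem_progressions (h : (a, d) ∈ progressions k n X) : 0 < a ∧ 0 < d := by
  have := mem_product.1 (mem_filter.1 h).1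
  exact ⟨(mem_Icc.1 this.1).1, (mem_Icc.1 this.2).1⟩

lemma first_le_of_arithProg_eq (hk : 0 < k) (h : arithProg k a d = arithProg k a' d') :
    a' ≤ a := by
  obtain ⟨i, -, hi⟩ :=
    mem_arithProg.1 (h ▸ mem_arithProg.2 ⟨0, hk, by simp⟩ : a ∈ arithProg k a' d')
  lia

lemma diff_le_of_arithProg_eq (hk : 1 < k) (hd : 0 < d) (h : arithProg k a d = arithProg k a d') :
    d' ≤ d := by
  obtain ⟨i, -, hi⟩ :=
    mem_arithProg.1 (h ▸ mem_arithProg.2 ⟨1, hk, by simp⟩ : a + d ∈ arithProg k a d')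
  have hi' : i * d' = d := by lia
  exact Nat.le_of_dvd hd ⟨i, by rw [← hi', mul_comm]⟩

lemma card_progHypergraph (hk : 1 < k) : #(progHypergraph k n X) = #(progressions k n X) := by
  refine card_image_of_injOn ?_
  rintro ⟨a, d⟩ h ⟨a', d'⟩ h' heq
  have hd := (pos_of_mem_progressions (mem_coe.1 h)).2
  have hd' := (pos_of_mem_progressions (mem_coe.1 h')).2
  have hk₀ : 0 < k := by lia
  obtain rfl : a = a' :=
    (first_le_of_arithProg_eq hk₀ heq.symm).antisymm (first_le_of_arithProg_eq hk₀ heq)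
  obtain rfl : d = d' :=
    (diff_le_of_arithProg_eq hk hd' heq.symm).antisymm (diff_le_of_arithProg_eq hk hd heq)
  rfl

lemma setDegree_progHypergraph_singleton_le (v : ℕ) :
    setDegree (progHypergraph k n X) {v} ≤ k * n := by
  refine (setDegree_le_card (t := range k ×ˢ Icc 1 n)
    (fun q ↦ arithProg k (v - q.1 * q.2) q.2) fun e he hv ↦ ?_).trans_eq (by simp)
  obtain ⟨⟨a, d⟩, hq, rfl⟩ := mem_image.1 he
  obtain ⟨i, hi, rfl⟩ := mem_arithProg.1 (singleton_subset_iff.1 hv)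
  have hd := (mem_product.1 (mem_filter.1 hq).1).2
  exact ⟨(i, d), mem_product.2 ⟨mem_range.2 hi, hd⟩, by rw [Nat.add_sub_cancel]⟩

/- A progression is determined by two of its terms and their positions. -/
lemma setDegree_progHypergraph_le_of_lt {x y : ℕ} (hx : x ∈ T) (hy : y ∈ T) (hxy : x < y) :
    setDegree (progHypergraph k n X) T ≤ k * k := by
  let diff (q : ℕ × ℕ) : ℕ := (y - x) / (q.2 - q.1)
  refine (setDegree_le_card (t := range k ×ˢ range k)
    (fun q ↦ arithProg k (x - q.1 * diff q) (diff q)) fun e he hT ↦ ?_).trans_eq (by simp)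
  obtain ⟨⟨a, d⟩, -, rfl⟩ := mem_image.1 he
  obtain ⟨i, hi, hax⟩ := mem_arithProg.1 (hT hx)
  obtain ⟨j, hj, hay⟩ := mem_arithProg.1 (hT hy)
  have hij : i < j := lt_of_not_ge fun hji ↦ by
    have := Nat.mul_le_mul_right d hji
    lia
  have hdiff : diff (i, j) = d := by
    refine Nat.div_eq_of_eq_mul_right (by simpa using hij) ?_
    rw [Nat.sub_mul]
    lia
  refine ⟨(i, j), mem_product.2 ⟨mem_range.2 hi, mem_range.2 hj⟩, ?_⟩
  simp only [hdiff, ← hax, Nat.add_sub_cancel]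

lemma progHypergraph_isBalanced {τ : ℝ} (hk : 0 < k) (hτ : 0 < τ) (hτ1 : τ ≤ 1)
    (hn : n * τ ^ k = τ) : IsBalanced X τ k (k * k) (progHypergraph k n X) := by
  have card_eq : ∀ e ∈ progHypergraph k n X, #e = k := by
    intro e he
    obtain ⟨⟨a, d⟩, hq, rfl⟩ := mem_image.1 he
    exact card_arithProg (pos_of_mem_progressions hq).2
  refine ⟨fun e he x hx ↦ ?_, card_eq, fun T hT ↦ ?_⟩
  · obtain ⟨⟨a, d⟩, hq, rfl⟩ := mem_image.1 he
    obtain ⟨i, hi, rfl⟩ := mem_arithProg.1 hx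
    exact (mem_filter.1 hq).2 i hi
  rcases T.eq_singleton_or_nontrivial hT.choose_spec with hv | hnt
  · rw [hv, card_singleton, pow_one]
    have hk₁ : (1 : ℝ) ≤ k := mod_cast hk
    have hdeg : (setDegree (progHypergraph k n X) {hT.choose} : ℝ) ≤ k * n :=
      mod_cast setDegree_progHypergraph_singleton_le _
    calc _ ≤ k * n * τ ^ k := by gcongr
      _ = 1 * k * τ := by rw [mul_assoc, hn, one_mul]
      _ ≤ k * k * τ := by gcongr
  · rcases Nat.eq_zero_or_pos (setDegree (progHypergraph k n X) T) with hzero | hpos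
    · rw [hzero, Nat.cast_zero, zero_mul]
      positivity
    obtain ⟨e, he, hTe⟩ := exists_superset_mem_of_setDegree_pos hpos
    obtain ⟨x, hx, y, hy, hxy⟩ := hnt.exists_lt
    have hdeg : (setDegree (progHypergraph k n X) T : ℝ) ≤ k * k :=
      mod_cast setDegree_progHypergraph_le_of_lt hx hy hxy
    have hpow : τ ^ k ≤ τ ^ #T :=
      pow_le_pow_of_le_one hτ.le hτ1 ((card_le_card hTe).trans_eq (card_eq e he))
    gcongr

lemma IsProgFree.isIndependent (h : IsProgFree k I) : IsIndependent (progHypergraph k n X) I := by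
  intro e he heI
  obtain ⟨⟨a, d⟩, hq, rfl⟩ := mem_image.1 he
  obtain ⟨ha, hd⟩ := pos_of_mem_progressions hq
  obtain ⟨i, hi, hnotMem⟩ := h a d ha hd
  exact hnotMem (heI (mem_arithProg.2 ⟨i, hi, rfl⟩))

lemma exists_hasContainers_isProgFree_of_le_card (hk : 2 ≤ k) {ε : ℝ} (hε : 0 < ε) :
    ∃ C η : ℝ, 0 ≤ C ∧ 0 < η ∧ ∃ n₀ : ℕ, ∀ n ≥ n₀, ∀ τ : ℝ, 0 < τ → τ ≤ 1 → n * τ ^ k = τ →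
      1 ≤ ε * n * τ → ∀ X ⊆ Icc 1 n, ε * n ≤ #X →
      HasContainers X (IsProgFree k) (C * (n * τ)) ((1 - η) * #X) := by
  obtain ⟨c, hc, n₀, hsupersat⟩ := exists_mul_sq_le_card_progressions hk hε
  have hk₀ : 0 < k := by lia
  obtain ⟨C, η, hC, hη, hcont⟩ := exists_hasContainers_of_isBalanced (α := ℕ) (k - 1)
    (K := k * k) (by positivity) hc
  rw [Nat.sub_add_cancel hk₀] at hcont
  refine ⟨C, η, hC, hη, n₀, fun n hn τ hτ hτ1 hnτ hεn X hX hcard ↦ ?_⟩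
  have card_le : (#X : ℝ) ≤ n := mod_cast (card_le_card hX).trans_eq (by simp)
  have many_edges : c * (#X * τ) ≤ #(progHypergraph k n X) * τ ^ k := by
    rw [card_progHypergraph hk]
    calc c * (#X * τ) ≤ c * (n * τ) := by gcongr
      _ = c * n ^ 2 * τ ^ k := by
          nth_rw 1 [← hnτ]
          ring
      _ ≤ _ := by
          gcongr
          exact hsupersat n hn X hX hcard
  exact (hcont X τ _ hτ (hεn.trans (by gcongr)) (progHypergraph_isBalanced hk₀ hτ hτ1 hnτ)
    many_edges).mono (fun I hI ↦ hI.isIndependent) (by gcongr) le_rfl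

theorem exists_hasContainers_isProgFree (hk : 2 ≤ k) {ε : ℝ} (hε : 0 < ε) :
    ∃ C : ℝ, ∃ n₀ : ℕ, ∀ n ≥ n₀, ∀ τ : ℝ, 0 < τ → τ ≤ 1 → n * τ ^ k = τ → 1 ≤ ε * n * τ →
      HasContainers (Icc 1 n) (IsProgFree k) (C * (n * τ)) (ε * n) := by
  obtain ⟨C, η, hC, hη, n₀, hstep⟩ := exists_hasContainers_isProgFree_of_le_card hk hε
  let r := max (1 - η) 0
  obtain ⟨j, hj⟩ := exists_pow_lt_of_lt_one hε (show r < 1 from max_lt (by linarith) one_pos)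
  refine ⟨j * C, n₀, fun n hn τ hτ hτ1 hnτ hεn ↦ ?_⟩
  rw [mul_assoc]
  refine hasContainers_of_forall_lt_card (r := r) (le_max_right _ _) (by positivity)
    (fun X hX hcard ↦ (hstep n hn τ hτ hτ1 hnτ hεn X hX hcard.le).mono (fun _ ↦ id) le_rfl ?_)
    j _ Subset.rfl ?_
  · gcongr
    exact le_max_left _ _
  · rw [Nat.card_Icc, Nat.add_sub_cancel, mul_comm]
    gcongr

end ArithmeticProgressions

/-! ### Random subsets -/

section RandomSubset

variable {n : ℕ} {p : ℝ} {P Q : Finset ℕ → Prop}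

lemma randomSubsetProb_mono (hp₀ : 0 ≤ p) (hp₁ : p ≤ 1) (h : ∀ S ⊆ Icc 1 n, P S → Q S) :
    randomSubsetProb n p P ≤ randomSubsetProb n p Q := by
  have : 0 ≤ 1 - p := by linarith
  refine sum_le_sum fun S hS ↦ ?_
  by_cases hP : P S
  · rw [if_pos hP, if_pos (h S (mem_powerset.1 hS) hP)]
  · rw [if_neg hP]
    positivity

lemma randomSubsetProb_or_le (hp₀ : 0 ≤ p) (hp₁ : p ≤ 1) :
    randomSubsetProb n p (fun S ↦ P S ∨ Q S) ≤ randomSubsetProb n p P + randomSubsetProb n p Q := by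
  have : 0 ≤ 1 - p := by linarith
  simp only [randomSubsetProb, ← sum_add_distrib]
  refine sum_le_sum fun S _ ↦ ?_
  have : 0 ≤ p ^ #S * (1 - p) ^ (n - #S) := by positivity
  by_cases hP : P S <;> by_cases hQ : Q S <;> simp [hP, hQ, this]

lemma randomSubsetProb_exists_le {β : Type*} {R : β → Finset ℕ → Prop} (hp₀ : 0 ≤ p) (hp₁ : p ≤ 1)
    (s : Finset β) :
    randomSubsetProb n p (fun S ↦ ∃ b ∈ s, R b S) ≤ ∑ b ∈ s, randomSubsetProb n p (R b) := by
  induction s using Finset.induction_on with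
  | empty => simp [randomSubsetProb]
  | insert b s hb ih =>
    simp only [exists_mem_insert, sum_insert hb]
    exact (randomSubsetProb_or_le hp₀ hp₁).trans (add_le_add le_rfl ih)

lemma randomSubsetProb_add_not (n : ℕ) (p : ℝ) (P : Finset ℕ → Prop) :
    randomSubsetProb n p P + randomSubsetProb n p (fun S ↦ ¬ P S) = 1 := by
  have total := sum_pow_mul_eq_add_pow p (1 - p) (Icc 1 n)
  rw [add_sub_cancel, one_pow, Nat.card_Icc, Nat.add_sub_cancel] at total
  rw [randomSubsetProb, randomSubsetProb, ← sum_add_distrib]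
  refine (sum_congr rfl fun S _ ↦ ?_).trans total
  by_cases hP : P S <;> simp [hP]

/- Markov's inequality for a product of independent factors: each `i` contributes `f i` if it
belongs to the random set and `g i` otherwise. -/
lemma randomSubsetProb_le_mul_prod (hp₀ : 0 ≤ p) (hp₁ : p ≤ 1) {c : ℝ} {f g : ℕ → ℝ} (hc : 0 ≤ c)
    (hf : ∀ i, 0 ≤ f i) (hg : ∀ i, 0 ≤ g i)
    (h : ∀ S ⊆ Icc 1 n, P S → 1 ≤ c * ((∏ i ∈ S, f i) * ∏ i ∈ Icc 1 n \ S, g i)) :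
    randomSubsetProb n p P ≤ c * ∏ i ∈ Icc 1 n, (p * f i + (1 - p) * g i) := by
  have : 0 ≤ 1 - p := by linarith
  rw [prod_add, mul_sum, randomSubsetProb]
  refine sum_le_sum fun S hS ↦ ?_
  have hS := mem_powerset.1 hS
  have weight_nonneg : 0 ≤ p ^ #S * (1 - p) ^ (n - #S) := by positivity
  have factors_nonneg : 0 ≤ (∏ i ∈ S, f i) * ∏ i ∈ Icc 1 n \ S, g i :=
    mul_nonneg (prod_nonneg fun i _ ↦ hf i) (prod_nonneg fun i _ ↦ hg i)
  have factor_weight : c * ((∏ i ∈ S, p * f i) * ∏ i ∈ Icc 1 n \ S, (1 - p) * g i) =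
      c * ((∏ i ∈ S, f i) * ∏ i ∈ Icc 1 n \ S, g i) * (p ^ #S * (1 - p) ^ (n - #S)) := by
    rw [prod_mul_distrib, prod_mul_distrib, prod_const, prod_const, card_sdiff_of_subset hS,
      Nat.card_Icc, Nat.add_sub_cancel]
    ring
  rw [factor_weight]
  split_ifs with hP
  · exact le_mul_of_one_le_left weight_nonneg (h S hS hP)
  · positivity

lemma randomSubsetProb_card_lt_half_le (hp₀ : 0 ≤ p) (hp₁ : p ≤ 1) :
    randomSubsetProb n p (fun S ↦ #S < p * n / 2) ≤ Real.exp (-(p * n) / 8) := by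
  have log_two_pos : 0 < Real.log 2 := Real.log_pos one_lt_two
  have log_two_lt : Real.log 2 < 3 / 4 := by linarith [Real.log_two_lt_d9]
  have exp_neg_log_two : Real.exp (-Real.log 2) = 1 / 2 := by
    rw [Real.exp_neg, Real.exp_log two_pos, one_div]
  calc _ ≤ Real.exp (Real.log 2 * (p * n / 2)) *
        ∏ i ∈ Icc 1 n, (p * Real.exp (-Real.log 2) + (1 - p) * 1) := by
        refine randomSubsetProb_le_mul_prod hp₀ hp₁ (Real.exp_pos _).le
          (fun _ ↦ (Real.exp_pos _).le) (fun _ ↦ zero_le_one) fun S _ hS ↦ ?_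
        rw [prod_const, prod_const, one_pow, mul_one, ← Real.exp_nat_mul, ← Real.exp_add]
        exact Real.one_le_exp (by nlinarith)
    _ ≤ Real.exp (Real.log 2 * (p * n / 2)) * ∏ i ∈ Icc 1 n, Real.exp (-(p / 2)) := by
        rw [exp_neg_log_two]
        gcongr
        linarith [Real.add_one_le_exp (-(p / 2))]
    _ = Real.exp (Real.log 2 * (p * n / 2) - p * n / 2) := by
        rw [prod_const, Nat.card_Icc, Nat.add_sub_cancel, ← Real.exp_nat_mul, ← Real.exp_add]
        ring_nf
    _ ≤ _ := Real.exp_le_exp.2 (by nlinarith [show 0 ≤ p * n by positivity])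

lemma randomSubsetProb_subset_and_le_card_inter_le (hp₀ : 0 ≤ p) (hp₁ : p ≤ 1) {t m : ℝ}
    (ht : 0 ≤ t) {F G : Finset ℕ} (hF : F ⊆ Icc 1 n) :
    randomSubsetProb n p (fun S ↦ F ⊆ S ∧ m ≤ #(S ∩ (G \ F))) ≤
      p ^ #F * Real.exp (p * #G * Real.exp t - t * m) := by
  have one_le : 1 ≤ Real.exp (p * Real.exp t) := Real.one_le_exp (by positivity)
  let f (i : ℕ) : ℝ := if i ∈ G \ F then Real.exp t else 1
  let g (i : ℕ) : ℝ := if i ∈ F then 0 else 1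
  have hf (i : ℕ) : 0 ≤ f i := by dsimp only [f]; positivity
  have hg (i : ℕ) : 0 ≤ g i := by dsimp only [g]; positivity
  calc _ ≤ Real.exp (-(t * m)) * ∏ i ∈ Icc 1 n, (p * f i + (1 - p) * g i) := by
        refine randomSubsetProb_le_mul_prod hp₀ hp₁ (Real.exp_pos _).le hf hg fun S _ ⟨hFS, hm⟩ ↦ ?_
        have prod_g : ∏ i ∈ Icc 1 n \ S, g i = 1 :=
          prod_eq_one fun i hi ↦ if_neg fun hiF ↦ (mem_sdiff.1 hi).2 (hFS hiF)
        rw [prod_g, mul_one, prod_ite_mem, prod_const, ← Real.exp_nat_mul, ← Real.exp_add]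
        exact Real.one_le_exp (by linarith [mul_le_mul_of_nonneg_left hm ht])
    _ ≤ Real.exp (-(t * m)) * ∏ i ∈ Icc 1 n,
          ((if i ∈ F then p else 1) * if i ∈ G then Real.exp (p * Real.exp t) else 1) := by
        have := Real.add_one_le_exp (p * Real.exp t)
        have hp₁' : 0 ≤ 1 - p := by linarith
        refine mul_le_mul_of_nonneg_left (prod_le_prod (fun i _ ↦ add_nonneg
          (mul_nonneg hp₀ (hf i)) (mul_nonneg hp₁' (hg i))) fun i _ ↦ ?_) (Real.exp_pos _).le
        by_cases hiF : i ∈ F <;> by_cases hiG : i ∈ G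
        · simpa [f, g, hiF, hiG] using le_mul_of_one_le_right hp₀ one_le
        · simp [f, g, hiF, hiG]
        · simpa [f, g, hiF, hiG] using by linarith
        · simp [f, g, hiF, hiG]
    _ = Real.exp (-(t * m)) * (p ^ #F * Real.exp (p * Real.exp t) ^ #(Icc 1 n ∩ G)) := by
        rw [prod_mul_distrib, prod_ite_mem, prod_ite_mem, prod_const, prod_const,
          inter_eq_right.2 hF]
    _ ≤ Real.exp (-(t * m)) * (p ^ #F * Real.exp (p * Real.exp t) ^ #G) := by
        gcongr
        exact inter_subset_right
    _ = _ := by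
        rw [← Real.exp_nat_mul, mul_left_comm, ← Real.exp_add]
        ring_nf

lemma sum_pow_card_filter_le (hp₀ : 0 ≤ p) (q : ℝ) :
    ∑ F ∈ (Icc 1 n).powerset with #F ≤ q, p ^ #F ≤ Real.exp (2 * q + p * n / 4) := by
  have exp_neg_two_le : Real.exp (-2) ≤ 1 / 4 := by
    rw [Real.exp_neg, inv_le_comm₀ (by positivity) (by norm_num),
      show (2 : ℝ) = 1 + 1 by norm_num, Real.exp_add]
    nlinarith [Real.add_one_le_exp (1 : ℝ)]
  calc _ ≤ ∑ F ∈ (Icc 1 n).powerset,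
        Real.exp (2 * q) * ((p * Real.exp (-2)) ^ #F * 1 ^ (#(Icc 1 n) - #F)) := by
        rw [sum_filter]
        refine sum_le_sum fun F _ ↦ ?_
        rw [one_pow, mul_one, mul_pow, ← Real.exp_nat_mul, mul_left_comm, ← Real.exp_add]
        split_ifs with hF
        · exact le_mul_of_one_le_right (by positivity) (Real.one_le_exp (by linarith))
        · positivity
    _ = Real.exp (2 * q) * (p * Real.exp (-2) + 1) ^ n := by
        rw [← mul_sum, sum_pow_mul_eq_add_pow, Nat.card_Icc, Nat.add_sub_cancel]
    _ ≤ Real.exp (2 * q) * Real.exp (p / 4) ^ n := by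
        gcongr
        nlinarith [Real.add_one_le_exp (p / 4)]
    _ = _ := by
        rw [← Real.exp_nat_mul, ← Real.exp_add]
        ring_nf

end RandomSubset

/-! ### The sparse random Szemerédi theorem -/

section SparseRandom

variable {k n : ℕ} {δ p q M : ℝ} {V : Finset ℕ}

lemma HasContainers.exists_fingerprint_of_not_isSzemeredi (h : HasContainers V (IsProgFree k) q M) :
    ∃ g : Finset ℕ → Finset ℕ, (∀ F, #(g F) ≤ M) ∧ ∀ S ⊆ V, ¬ IsSzemeredi δ k S →
      ∃ F ⊆ S, #F ≤ q ∧ δ * #S - q ≤ #(S ∩ (g F \ F)) := by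
  obtain ⟨g, hg, hfp⟩ := h
  refine ⟨g, fun F ↦ (hg F).2, fun S hS hnot ↦ ?_⟩
  simp only [IsSzemeredi, not_forall, not_exists, not_and] at hnot
  obtain ⟨B, hBS, hcard, hB⟩ := hnot
  obtain ⟨F, hFB, hF, hBg, -⟩ := hfp B (hBS.trans hS) fun a d ha hd ↦ by
    simpa using hB a d ha hd
  refine ⟨F, hFB.trans hBS, hF, ?_⟩
  have : B \ F ⊆ S ∩ (g F \ F) :=
    subset_inter (sdiff_subset.trans hBS) (sdiff_subset_sdiff hBg le_rfl)
  have : (#(B \ F) : ℝ) ≤ #(S ∩ (g F \ F)) := mod_cast card_le_card this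
  rw [cast_card_sdiff hFB] at this
  linarith

lemma mul_mul_exp_sub_le (hp₀ : 0 ≤ p) (hδ : δ ≠ 0) {x y : ℝ}
    (hx : x ≤ Real.exp (-(4 / δ)) / 4 * y) :
    p * x * Real.exp (4 / δ) - 4 / δ * (δ * (p * y) / 4) ≤ -(3 / 4 * (p * y)) := by
  have : p * x * Real.exp (4 / δ) ≤ p * y / 4 :=
    calc _ ≤ p * (Real.exp (-(4 / δ)) / 4 * y) * Real.exp (4 / δ) := by gcongr
      _ = p * y / 4 * (Real.exp (-(4 / δ)) * Real.exp (4 / δ)) := by ring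
      _ = p * y / 4 := by rw [← Real.exp_add, neg_add_cancel, Real.exp_zero, mul_one]
  have : 4 / δ * (δ * (p * y) / 4) = p * y := by field_simp
  linarith

theorem HasContainers.randomSubsetProb_not_isSzemeredi_le (hp₀ : 0 ≤ p) (hp₁ : p ≤ 1) (hδ₀ : 0 < δ)
    (hδ₁ : δ ≤ 1) (hq : q ≤ δ * (p * n) / 8)
    (h : HasContainers (Icc 1 n) (IsProgFree k) q (Real.exp (-(4 / δ)) / 4 * n)) :
    randomSubsetProb n p (fun S ↦ ¬ IsSzemeredi δ k S) ≤ 2 * Real.exp (-(p * n) / 8) := by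
  obtain ⟨g, hg, hfp⟩ := h.exists_fingerprint_of_not_isSzemeredi (δ := δ)
  let small : Finset (Finset ℕ) := {F ∈ (Icc 1 n).powerset | #F ≤ q}
  let m := δ * (p * n) / 4
  have hpn : 0 ≤ p * n := by positivity
  calc randomSubsetProb n p (fun S ↦ ¬ IsSzemeredi δ k S)
      ≤ randomSubsetProb n p fun S ↦
          #S < p * n / 2 ∨ ∃ F ∈ small, F ⊆ S ∧ m ≤ #(S ∩ (g F \ F)) := by
        refine randomSubsetProb_mono hp₀ hp₁ fun S hS hnot ↦ or_iff_not_imp_left.2 fun hlarge ↦ ?_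
        obtain ⟨F, hFS, hF, hcard⟩ := hfp S hS hnot
        refine ⟨F, mem_filter.2 ⟨mem_powerset.2 (hFS.trans hS), hF⟩, hFS, ?_⟩
        have := mul_le_mul_of_nonneg_left (not_lt.1 hlarge) hδ₀.le
        simp only [m]
        linarith
    _ ≤ Real.exp (-(p * n) / 8) +
          ∑ F ∈ small, randomSubsetProb n p fun S ↦ F ⊆ S ∧ m ≤ #(S ∩ (g F \ F)) :=
        (randomSubsetProb_or_le hp₀ hp₁).trans <| add_le_add
          (randomSubsetProb_card_lt_half_le hp₀ hp₁) (randomSubsetProb_exists_le hp₀ hp₁ small)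
    _ ≤ Real.exp (-(p * n) / 8) + ∑ F ∈ small, p ^ #F * Real.exp (-(3 / 4 * (p * n))) := by
        gcongr with F hF
        refine (randomSubsetProb_subset_and_le_card_inter_le hp₀ hp₁ (t := 4 / δ) (by positivity)
          (mem_powerset.1 (mem_filter.1 hF).1)).trans ?_
        gcongr
        exact mul_mul_exp_sub_le hp₀ hδ₀.ne' (hg F)
    _ ≤ Real.exp (-(p * n) / 8) +
          Real.exp (2 * q + p * n / 4) * Real.exp (-(3 / 4 * (p * n))) := by
        rw [← sum_mul]
        gcongr
        exact sum_pow_card_filter_le hp₀ q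
    _ ≤ Real.exp (-(p * n) / 8) + Real.exp (-(p * n) / 8) := by
        rw [← Real.exp_add]
        gcongr
        nlinarith
    _ = _ := (two_mul _).symm

lemma mul_rpow_pow_eq {x : ℝ} (hx : 0 < x) (hk : 1 < k) :
    x * (x ^ (-1 / ((k : ℝ) - 1))) ^ k = x ^ (-1 / ((k : ℝ) - 1)) := by
  have hk' : (k : ℝ) - 1 ≠ 0 := sub_ne_zero.2 (mod_cast hk.ne')
  calc _ = x ^ (1 + -1 / ((k : ℝ) - 1) * k) := by
        rw [Real.rpow_add hx, Real.rpow_one, Real.rpow_mul_natCast hx.le]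
    _ = _ := by
        congr 1
        field_simp
        ring

lemma exists_forall_ge_one_le_mul_rpow (hk : 2 < k) {ε : ℝ} (hε : 0 < ε) :
    ∃ n₀ : ℕ, ∀ n ≥ n₀, 0 < n ∧ 1 ≤ ε * n * (n : ℝ) ^ (-1 / ((k : ℝ) - 1)) := by
  have hk' : (2 : ℝ) < k := mod_cast hk
  have exponent_pos : 0 < 1 + -1 / ((k : ℝ) - 1) := by
    rw [neg_div, ← sub_eq_add_neg, sub_pos, div_lt_one (by linarith)]
    linarith
  have htendsto := (tendsto_rpow_atTop exponent_pos).comp (tendsto_natCast_atTop_atTop (R := ℝ))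
  obtain ⟨n₀, hn₀⟩ := Filter.eventually_atTop.1 (htendsto.eventually_ge_atTop (1 / ε))
  refine ⟨max n₀ 1, fun n hn ↦ ⟨by lia, ?_⟩⟩
  have hn' : (0 : ℝ) < n := mod_cast (by lia : 0 < n)
  have := hn₀ n (by lia)
  rwa [comp_apply, Real.rpow_add hn', Real.rpow_one, div_le_iff₀' hε, ← mul_assoc] at this

end SparseRandom

end SparseSzemeredi

open SparseSzemeredi

/-- Corollary 4.1: a quantitative sparse random version of Szemerédi's theorem. -/
theorem szemeredi_random_sparse_strong (k : ℕ) (hk : 3 ≤ k) (δ : ℝ) (hδ0 : 0 < δ)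
    (hδ1 : δ < 1) :
    ∃ C : ℝ, ∃ n₀ : ℕ, ∀ n : ℕ, n₀ ≤ n → ∀ p : ℝ, 0 ≤ p → p ≤ 1 →
      C * (n : ℝ) ^ (-(1 : ℝ) / ((k : ℝ) - 1)) ≤ p →
      1 - 2 * Real.exp (-(p * (n : ℝ)) / 8) ≤ randomSubsetProb n p (IsSzemeredi δ k) := by
  have hε : 0 < Real.exp (-(4 / δ)) / 4 := by positivity
  obtain ⟨C, n₀, hcontainers⟩ := exists_hasContainers_isProgFree (by lia : 2 ≤ k) hε
  obtain ⟨n₁, hlarge⟩ := exists_forall_ge_one_le_mul_rpow hk hε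
  refine ⟨8 * C / δ, max n₀ n₁, fun n hn p hp₀ hp₁ hp ↦ ?_⟩
  obtain ⟨hn_pos, hτn⟩ := hlarge n (by lia)
  set τ : ℝ := (n : ℝ) ^ (-(1 : ℝ) / ((k : ℝ) - 1))
  have hτ₀ : 0 < τ := by positivity
  have hτ₁ : τ ≤ 1 := by
    have : (3 : ℝ) ≤ k := mod_cast hk
    exact Real.rpow_le_one_of_one_le_of_nonpos (mod_cast hn_pos)
      (div_nonpos_of_nonpos_of_nonneg (by norm_num) (by linarith))
  have hτk : n * τ ^ k = τ := mul_rpow_pow_eq (mod_cast hn_pos) (by lia)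
  have hq : C * (n * τ) ≤ δ * (p * n) / 8 :=
    calc C * (n * τ) = 8 * C / δ * τ * (δ * n / 8) := by field_simp
      _ ≤ p * (δ * n / 8) := by gcongr
      _ = δ * (p * n) / 8 := by ring
  have hfail := (hcontainers n (by lia) τ hτ₀ hτ₁ hτk hτn).randomSubsetProb_not_isSzemeredi_le
    hp₀ hp₁ hδ0 hδ1.le hq
  linarith [randomSubsetProb_add_not n p (IsSzemeredi δ k)]
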